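/- Every finite vertex algebra is solvable: if $V$ is a vertex algebra finitely generated as a $\mathbb{C}[T]$-module, then the underlying Lie conformal algebra $V^{\mathrm{conf}}$ (with $[a_\lambda b] = \sum_{n\geq 0}\frac{\lambda^n}{n!}a_{(n)}b$) satisfies $R^{(N)} = 0$ for some $N$, where $R^{(0)} = V$ and $R^{(n+1)} = [R^{(n)}, R^{(n)}]$. -/

import Mathlib

open scoped BigOperators

/-- A vertex algebra structure on a complex vector space `V`.
`P n a b` denotes the `n`-th product `a_{(n)} b`, `vac` is the vacuum `𝟙`,
and `D` is the infinitesimal translation operator `T`. -/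
structure VertexAlgebra (V : Type*) [AddCommGroup V] [Module ℂ V] where
  P : ℤ → V →ₗ[ℂ] V →ₗ[ℂ] V
  vac : V
  D : V →ₗ[ℂ] V
  field_ax : ∀ a b : V, ∃ N : ℕ, ∀ n : ℕ, N ≤ n → P n a b = 0
  vac_field : ∀ (n : ℤ) (a : V), P n vac a = if n = -1 then a else 0
  creation : ∀ a : V, P (-1) a vac = a
  creation_pos : ∀ (a : V) (n : ℤ), 0 ≤ n → P n a vac = 0
  D_vac : D vac = 0
  transl_inv : ∀ (n : ℤ) (a b : V), P n (D a) b = (-n : ℂ) • P (n - 1) a b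
  D_deriv : ∀ (n : ℤ) (a b : V), D (P n a b) = P n (D a) b + P n a (D b)
  skew : ∀ (n : ℤ) (a b : V),
    P n a b = ∑ᶠ j : ℕ, (((-1 : ℂ) ^ (n + j + 1)) / (j.factorial : ℂ)) • (D ^ j) (P (n + j) b a)
  borcherds : ∀ (m k : ℤ) (a b c : V),
    P m a (P k b c) - P k b (P m a c)
      = ∑ᶠ j : ℕ, ((Ring.choose m j : ℤ) : ℂ) • P (m + k - j) (P j a b) c

namespace VertexAlgebra

variable {V : Type*} [AddCommGroup V] [Module ℂ V] (W : VertexAlgebra V)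

/-- An ideal of a vertex algebra: a `ℂ[T]`-submodule closed under all products with
arbitrary elements of `V`. -/
def IsIdeal (I : Submodule ℂ V) : Prop :=
  (∀ x ∈ I, W.D x ∈ I) ∧ ∀ (a : V), ∀ b ∈ I, ∀ n : ℤ, W.P n a b ∈ I

/-- `A · B`: the span of all products `a_{(j)} b`, `a ∈ A`, `b ∈ B`, `j ∈ ℤ`. -/
def prodSpan (A B : Submodule ℂ V) : Submodule ℂ V :=
  Submodule.span ℂ {x | ∃ a ∈ A, ∃ b ∈ B, ∃ j : ℤ, x = W.P j a b}

/-- `[A, B]`: the span of all products `a_{(j)} b`, `a ∈ A`, `b ∈ B`, `j ≥ 0`. -/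
def posSpan (A B : Submodule ℂ V) : Submodule ℂ V :=
  Submodule.span ℂ {x | ∃ a ∈ A, ∃ b ∈ B, ∃ j : ℕ, x = W.P j a b}

/-- The sequence `I^1 = I`, `I^{n+1} = I^n · I^n` (indexed so that `nilSeq I n = I^{n+1}`). -/
def nilSeq (I : Submodule ℂ V) : ℕ → Submodule ℂ V
  | 0 => I
  | n + 1 => W.prodSpan (nilSeq I n) (nilSeq I n)

/-- A nil-ideal: an ideal whose sequence of iterated self-products vanishes. -/
def IsNilIdeal (I : Submodule ℂ V) : Prop :=
  W.IsIdeal I ∧ ∃ n : ℕ, W.nilSeq I n = ⊥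

/-- A vertex algebra is finite if it is a finitely generated `ℂ[T]`-module. -/
def IsFinite : Prop :=
  ∃ s : Finset V, ∀ v : V,
    v ∈ Submodule.span ℂ {x | ∃ g ∈ s, ∃ k : ℕ, x = (W.D ^ k) g}

/-- Abelian ideal. -/
def IsAbelianIdeal (I : Submodule ℂ V) : Prop :=
  W.IsIdeal I ∧ ∀ a ∈ I, ∀ b ∈ I, ∀ n : ℤ, W.P n a b = 0

end VertexAlgebra

namespace VertexAlgebra

variable {V : Type*} [AddCommGroup V] [Module ℂ V]

/-- The derived series of the Lie conformal algebra underlying a vertex algebra. -/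
def derSeries (W : VertexAlgebra V) : ℕ → Submodule ℂ V
  | 0 => ⊤
  | n + 1 => W.posSpan (derSeries W n) (derSeries W n)

end VertexAlgebra

namespace VertexAlgebra

open Finset Polynomial

section basics

variable {V : Type*} [AddCommGroup V] [Module ℂ V] (W : VertexAlgebra V)

theorem comm_sum (m k : ℤ) (a b c : V) (N : ℕ) (h : ∀ j : ℕ, N ≤ j → W.P j a b = 0) :
    W.P m a (W.P k b c) - W.P k b (W.P m a c)
      = ∑ j ∈ range N, ((Ring.choose m j : ℤ) : ℂ) • W.P (m + k - j) (W.P j a b) c := by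
  rw [W.borcherds]
  apply finsum_eq_sum_of_support_subset
  intro j hj
  simp only [Function.mem_support, ne_eq] at hj
  simp only [coe_range, Set.mem_Iio]
  by_contra hN
  apply hj
  rw [h j (by omega)]
  simp

theorem comm_nat (m : ℕ) (k : ℤ) (a b c : V) :
    W.P m a (W.P k b c) - W.P k b (W.P m a c)
      = ∑ j ∈ range (m + 1), (m.choose j : ℂ) • W.P (m + k - j) (W.P j a b) c := by
  rw [W.borcherds]
  rw [finsum_eq_sum_of_support_subset (s := range (m+1))]
  · apply sum_congr rfl
    intro j _
    rw [Ring.choose_natCast]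
    simp
  intro j hj
  simp only [Function.mem_support, ne_eq] at hj
  simp only [coe_range, Set.mem_Iio]
  by_contra hN
  apply hj
  rw [Ring.choose_natCast, Nat.choose_eq_zero_of_lt (by omega)]
  simp

theorem field_ax' (n : ℤ) (a b : V) : ∃ N : ℕ, ∀ j : ℕ, N ≤ j → W.P (n + j) a b = 0 := by
  obtain ⟨N, hN⟩ := W.field_ax a b
  refine ⟨N + n.natAbs, fun j hj => ?_⟩
  have := hN (n + j).toNat (by omega)
  rwa [Int.toNat_of_nonneg (by omega)] at this

theorem skew_sum (n : ℤ) (a b : V) (N : ℕ) (h : ∀ j : ℕ, N ≤ j → W.P (n + j) b a = 0) :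
    W.P n a b = ∑ j ∈ range N,
      (((-1 : ℂ) ^ (n + j + 1)) / (j.factorial : ℂ)) • (W.D ^ j) (W.P (n + j) b a) := by
  rw [W.skew]
  apply finsum_eq_sum_of_support_subset
  intro j hj
  simp only [Function.mem_support, ne_eq] at hj
  simp only [coe_range, Set.mem_Iio]
  by_contra hN
  apply hj
  rw [h j (by omega)]
  simp

theorem skew_zero (a b : V) (h : ∀ n : ℤ, W.P n a b = 0) (n : ℤ) : W.P n b a = 0 := by
  rw [W.skew_sum n b a 0 (fun j _ => h _)]
  simp

theorem binom_zero (N : ℕ) : ∀ (h : ℕ → V) (m0 : ℤ),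
    (∀ m ≤ m0, ∑ j ∈ range N, ((Ring.choose m j : ℤ) : ℂ) • h j = 0) → ∀ j < N, h j = 0 := by
  induction N with
  | zero => intro h m0 _ j hj; omega
  | succ N ih =>
    intro h m0 H
    have key : ∀ j < N, h (j + 1) = 0 := by
      apply ih (fun j => h (j + 1)) (m0 - 1)
      intro m hm
      have h1 := H m (by omega)
      have h2 := H (m + 1) (by omega)
      rw [sum_range_succ'] at h1 h2
      simp only [Ring.choose_zero_right] at h1 h2
      have h3 : ∑ j ∈ range N, ((Ring.choose (m + 1) (j + 1) : ℤ) : ℂ) • h (j + 1)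
          = ∑ j ∈ range N, ((Ring.choose m j : ℤ) : ℂ) • h (j + 1)
            + ∑ j ∈ range N, ((Ring.choose m (j + 1) : ℤ) : ℂ) • h (j + 1) := by
        rw [← sum_add_distrib]
        apply sum_congr rfl
        intro j _
        rw [Ring.choose_succ_succ, Int.cast_add, add_smul]
      rw [h3] at h2
      rw [add_assoc, h1, add_zero] at h2
      exact h2
    intro j hj
    rcases j with _ | j
    · have h1 := H m0 le_rfl
      rw [sum_range_succ'] at h1
      rw [sum_eq_zero] at h1
      · simpa using h1
      · intro j hj
        rw [key j (by simpa using hj), smul_zero]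
    · exact key j (by omega)

/-- locality consequence: the annihilator is stable under all modes -/
theorem ann_mode (x y : V) (h : ∀ n : ℤ, W.P n x y = 0) (v : V) (m n : ℤ) :
    W.P m x (W.P n v y) = 0 := by
  obtain ⟨N, hN⟩ := W.field_ax x v
  have key : ∀ m' : ℤ, W.P m' x (W.P (m + n - m') v y) =
      ∑ j ∈ range N, ((Ring.choose m' j : ℤ) : ℂ) • W.P (m + n - j) (W.P j x v) y := by
    intro m'
    have := W.comm_sum m' (m + n - m') x v y N hN
    rw [h, map_zero, sub_zero] at this
    rw [this]
    apply sum_congr rfl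
    intro j _
    congr 2
    ring_nf
  obtain ⟨K, hK⟩ := W.field_ax' (m + n) v y
  have hz := binom_zero N (fun j => W.P (m + n - j) (W.P j x v) y) (-K) (by
    intro m' hm'
    rw [← key]
    have := hK (-m').toNat (by omega)
    rw [Int.toNat_of_nonneg (by omega)] at this
    rw [sub_eq_add_neg, this, map_zero])
  have := key m
  rw [show m + n - m = n by ring] at this
  rw [this]
  apply sum_eq_zero
  intro j hj
  rw [hz j (by simpa using hj), smul_zero]

/-- annihilator of a set -/
def ann (S : Set V) : Submodule ℂ V where
  carrier := {y | ∀ x ∈ S, ∀ n : ℤ, W.P n x y = 0}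
  add_mem' := by
    intro a b ha hb x hx n
    rw [map_add, ha x hx n, hb x hx n, add_zero]
  zero_mem' := by intro x _ n; simp
  smul_mem' := by
    intro c a ha x hx n
    rw [map_smul, ha x hx n, smul_zero]

theorem ann_ideal (S : Set V) : W.IsIdeal (W.ann S) := by
  refine ⟨?_, ?_⟩
  · intro y hy x hx n
    have h1 := W.D_deriv n x y
    rw [hy x hx n, W.transl_inv, hy x hx (n-1)] at h1
    simpa using h1.symm
  · intro v y hy n x hx m
    exact W.ann_mode x y (hy x hx) v m n

def IsPrimeVA : Prop :=
  ∀ J K : Submodule ℂ V, W.IsIdeal J → W.IsIdeal K →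
    (∀ a ∈ J, ∀ b ∈ K, ∀ n : ℤ, W.P n a b = 0) → J = ⊥ ∨ K = ⊥

def Dom : Prop := ∀ x y : V, (∀ n : ℤ, W.P n x y = 0) → x = 0 ∨ y = 0

theorem dom_of_prime (h : W.IsPrimeVA) : W.Dom := by
  intro x y hxy
  have := h (W.ann (W.ann {x} : Set V)) (W.ann {x}) (W.ann_ideal _) (W.ann_ideal _) (by
    intro a ha b hb n
    exact W.skew_zero b a (ha b hb) n)
  rcases this with h1 | h1
  · left
    have : x ∈ W.ann (W.ann {x} : Set V) := by
      intro b hb n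
      exact W.skew_zero x b (hb x rfl) n
    rw [h1] at this
    simpa using this
  · right
    have : y ∈ W.ann {x} := by
      intro z hz n
      rw [Set.mem_singleton_iff.1 hz]
      exact hxy n
    rw [h1] at this
    simpa using this

/-- the `ℂ[T]`-module structure -/
@[reducible] noncomputable def polyModule : Module ℂ[X] V :=
  Module.compHom V (Polynomial.aeval W.D).toRingHom

theorem noeth (hfin : W.IsFinite) :
    letI := W.polyModule
    IsNoetherian ℂ[X] V := by
  letI := W.polyModule
  have : Module.Finite ℂ[X] V := by
    obtain ⟨s, hs⟩ := hfin
    refine ⟨⟨s, ?_⟩⟩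
    rw [eq_top_iff]
    intro v _
    have := hs v
    refine Submodule.span_induction (p := fun v _ => v ∈ Submodule.span ℂ[X] (s : Set V))
      ?_ ?_ ?_ ?_ this
    · rintro x ⟨g, hg, k, rfl⟩
      have : (W.D ^ k) g = (X ^ k : ℂ[X]) • g := by
        change _ = (Polynomial.aeval W.D (X ^ k)) g
        simp
      rw [this]
      exact Submodule.smul_mem _ _ (Submodule.subset_span hg)
    · exact Submodule.zero_mem _
    · intro x y _ _ hx hy
      exact Submodule.add_mem _ hx hy
    · intro a x _ hx
      have : a • x = (C a : ℂ[X]) • x := by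
        change _ = (Polynomial.aeval W.D (C a)) x
        simp
      rw [this]
      exact Submodule.smul_mem _ _ hx
  infer_instance

theorem aeval_mem (S : Submodule ℂ V) (hS : ∀ x ∈ S, W.D x ∈ S) (p : ℂ[X]) (x : V) (hx : x ∈ S) :
    aeval W.D p x ∈ S := by
  induction p using Polynomial.induction_on' with
  | add p q hp hq => rw [map_add]; exact S.add_mem hp hq
  | monomial n a =>
    rw [aeval_monomial]
    have : (W.D ^ n) x ∈ S := by
      induction n with
      | zero => simpa using hx
      | succ n ih => rw [pow_succ']; exact hS _ ih
    simpa using S.smul_mem a this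

/-- Upgrade to a `ℂ[T]`-submodule. -/
noncomputable def toPoly (S : Submodule ℂ V) (hS : ∀ x ∈ S, W.D x ∈ S) :
    letI := W.polyModule
    Submodule ℂ[X] V :=
  letI := W.polyModule
  { carrier := S
    add_mem' := S.add_mem
    zero_mem' := S.zero_mem
    smul_mem' := fun p x hx => W.aeval_mem S hS p x hx }

theorem exists_max (hfin : W.IsFinite) (p : Submodule ℂ V → Prop)
    (hp : ∀ I, p I → ∀ x ∈ I, W.D x ∈ I) (hne : ∃ I, p I) :
    ∃ I, p I ∧ ∀ J, p J → I ≤ J → J = I := by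
  letI := W.polyModule
  have hn := W.noeth hfin
  rw [← set_has_maximal_iff_noetherian] at hn
  obtain ⟨I0, h0⟩ := hne
  obtain ⟨M, ⟨I, hI, rfl⟩, hM⟩ := hn {M | ∃ I, ∃ h : p I, M = W.toPoly I (hp I h)}
    ⟨_, I0, h0, rfl⟩
  refine ⟨I, hI, fun J hJ hIJ => ?_⟩
  by_contra hne
  apply hM _ ⟨J, hJ, rfl⟩
  refine lt_of_le_of_ne (fun x hx => hIJ hx) ?_
  intro heq
  apply hne
  ext x
  have : x ∈ W.toPoly I (hp I hI) ↔ x ∈ W.toPoly J (hp J hJ) := by rw [heq]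
  exact this.symm

theorem chain (hfin : W.IsFinite) (S : ℕ → Submodule ℂ V) (mono : ∀ m, S m ≤ S (m + 1))
    (hS : ∀ m, ∀ x ∈ S m, W.D x ∈ S m) : ∃ m, S (m + 1) ≤ S m := by
  obtain ⟨I, ⟨m, rfl⟩, hm⟩ := W.exists_max hfin (fun I => ∃ m, I = S m)
    (by rintro _ ⟨m, rfl⟩; exact hS m) ⟨_, 0, rfl⟩
  exact ⟨m, (hm _ ⟨m + 1, rfl⟩ (mono m)).le⟩

end basics

end VertexAlgebra

namespace VertexAlgebra

open Finset Polynomial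

section abstract_algebra

theorem comm_aeval {R : Type*} [Ring R] [Algebra ℂ R] {f g : R} (h : Commute f g) (p : ℂ[X]) :
    Commute f (aeval g p) := by
  induction p using Polynomial.induction_on' with
  | add p q hp hq => rw [map_add]; exact hp.add_right hq
  | monomial n a =>
    rw [aeval_monomial]
    exact (show Commute f (algebraMap ℂ R a) from (Algebra.commutes a f).symm).mul_right (h.pow_right n)

theorem abs_lem {E : Type*} [AddCommGroup E] [Module ℂ E] (f : Module.End ℂ E)
    (S : Submodule ℂ E) (hS : ∀ x ∈ S, f x ∈ S)
    (h1 : ∀ e : ℂ, e ≠ 0 → ∀ x ∈ S, f x = e • x → x = 0)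
    (h2 : ∀ x ∈ S, f (f x) = 0 → f x = 0) :
    ∀ (n : ℕ) (p : ℂ[X]), p.natDegree = n → p ≠ 0 → ∀ x ∈ S, aeval f p x = 0 → f x = 0 := by
  intro n
  induction n with
  | zero =>
    intro p hn hp x hx h
    rw [Polynomial.eq_C_of_natDegree_eq_zero hn] at h hp
    simp only [aeval_C, Module.algebraMap_end_apply, smul_eq_zero] at h
    rcases h with h | h
    · rw [h] at hp; simp at hp
    · rw [h, map_zero]
  | succ n ih =>
    intro p hn hp x hx h
    obtain ⟨e, he⟩ := IsAlgClosed.exists_root p (by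
      intro h0
      rw [Polynomial.degree_eq_natDegree hp, hn] at h0
      norm_cast at h0)
    obtain ⟨q, rfl⟩ := Polynomial.dvd_iff_isRoot.2 he
    have hq : q ≠ 0 := right_ne_zero_of_mul hp
    have hd : q.natDegree = n := by
      rw [Polynomial.natDegree_mul (X_sub_C_ne_zero e) hq, natDegree_X_sub_C] at hn
      omega
    rw [mul_comm, map_mul] at h
    have h3 : aeval f q (f x - e • x) = 0 := by
      simpa using h
    have h4 := ih q hd hq _ (S.sub_mem (hS x hx) (S.smul_mem e hx)) h3
    rw [map_sub, map_smul, sub_eq_zero] at h4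
    by_cases he : e = 0
    · rw [he, zero_smul] at h4
      exact h2 x hx h4
    · exact h1 e he _ (hS x hx) h4

theorem exists_eig {E : Type*} [AddCommGroup E] [Module ℂ E] (f : Module.End ℂ E) :
    ∀ (n : ℕ) (p : ℂ[X]), p.natDegree = n → p ≠ 0 → ∀ x : E, x ≠ 0 → aeval f p x = 0 →
      ∃ (w : E) (e : ℂ), w ≠ 0 ∧ f w = e • w := by
  intro n
  induction n with
  | zero =>
    intro p hn hp x hx h
    rw [Polynomial.eq_C_of_natDegree_eq_zero hn] at h hp
    simp only [aeval_C, Module.algebraMap_end_apply, smul_eq_zero] at h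
    rcases h with h | h
    · rw [h] at hp; simp at hp
    · exact absurd h hx
  | succ n ih =>
    intro p hn hp x hx h
    obtain ⟨e, he⟩ := IsAlgClosed.exists_root p (by
      intro h0
      rw [Polynomial.degree_eq_natDegree hp, hn] at h0
      norm_cast at h0)
    obtain ⟨q, rfl⟩ := Polynomial.dvd_iff_isRoot.2 he
    have hq : q ≠ 0 := right_ne_zero_of_mul hp
    have hd : q.natDegree = n := by
      rw [Polynomial.natDegree_mul (X_sub_C_ne_zero e) hq, natDegree_X_sub_C] at hn
      omega
    rw [mul_comm, map_mul] at h
    have h3 : aeval f q (f x - e • x) = 0 := by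
      simpa using h
    by_cases h5 : f x - e • x = 0
    · exact ⟨x, e, hx, sub_eq_zero.1 h5⟩
    · exact ih q hd hq _ h5 h3

/-- evaluation of a two variable polynomial -/
noncomputable def Phi {R : Type*} [Ring R] [Algebra ℂ R] (s t : R) (Q : ℂ[X][X]) : R :=
  eval₂ (aeval s : ℂ[X] →ₐ[ℂ] R).toRingHom t Q

section
variable {R : Type*} [Ring R] [Algebra ℂ R] (s t : R)

theorem Phi_add (P Q : ℂ[X][X]) : Phi s t (P + Q) = Phi s t P + Phi s t Q := by
  simp [Phi, eval₂_add]

theorem Phi_monomial (n : ℕ) (a : ℂ[X]) : Phi s t (monomial n a) = aeval s a * t ^ n := by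
  simp [Phi, eval₂_monomial]

theorem Phi_comm {u : R} (h1 : Commute u s) (h2 : Commute u t) (Q : ℂ[X][X]) :
    Commute u (Phi s t Q) := by
  induction Q using Polynomial.induction_on' with
  | add p q hp hq => rw [Phi_add]; exact hp.add_right hq
  | monomial n a =>
    rw [Phi_monomial]
    exact (comm_aeval h1 a).mul_right (h2.pow_right n)

theorem Phi_deriv {s t e c : R} (hse : Commute s e) (hct : Commute c t)
    (hte : t * e - e * t = c) (Q : ℂ[X][X]) :
    Phi s t Q * e - e * Phi s t Q = Phi s t (derivative Q) * c := by
  induction Q using Polynomial.induction_on' with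
  | add p q hp hq =>
    rw [derivative_add, Phi_add, Phi_add, add_mul, mul_add, add_mul, ← hp, ← hq]
    abel
  | monomial n a =>
    have hpow : ∀ n : ℕ, t ^ n * e - e * t ^ n = (n : R) * t ^ (n - 1) * c := by
      intro n
      induction n with
      | zero => simp
      | succ n ih =>
        have h1 : t ^ (n + 1) * e - e * t ^ (n + 1)
            = t * (t ^ n * e - e * t ^ n) + (t * e - e * t) * t ^ n := by
          rw [pow_succ']; noncomm_ring
        rw [h1, ih, hte, (hct.pow_right n).eq]
        rcases n with _ | n
        · simp
        · rw [← mul_assoc, ← mul_assoc, ← (Nat.cast_commute (n+1) t).eq, mul_assoc _ t,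
            Nat.add_sub_cancel, ← pow_succ', ← add_mul, Nat.add_sub_cancel]
          push_cast
          congr 1
          noncomm_ring
    rw [derivative_monomial, Phi_monomial, Phi_monomial, ← mul_assoc,
      (comm_aeval hse.symm a).eq, mul_assoc, mul_assoc, ← mul_sub, hpow, map_mul, map_natCast]
    simp only [mul_assoc]

theorem Kl {s t e c : R} (hsc : Commute s c) (hse : Commute s e) (hct : Commute c t)
    (hte : t * e - e * t = c) : ∀ (n N : ℕ) (Q : ℂ[X][X]), Q.natDegree ≤ n →
    Phi s t Q * c ^ N = 0 → ∃ N', aeval s (Q.coeff n) * c ^ N' = 0 := by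
  intro n
  induction n with
  | zero =>
    intro N Q hQ h
    rw [eq_C_of_natDegree_le_zero hQ, ← monomial_zero_left, Phi_monomial] at h
    exact ⟨N, by simpa using h⟩
  | succ n ih =>
    intro N Q hQ h
    have hc : Commute (c ^ N) (Phi s t Q) := Phi_comm s t (hsc.symm.pow_left N) (hct.pow_left N) Q
    have hc' : Commute (c ^ N) (Phi s t (derivative Q)) :=
      Phi_comm s t (hsc.symm.pow_left N) (hct.pow_left N) _
    have h2 : Phi s t (derivative Q) * c ^ (N + 1 + N) = 0 := by
      have h3 : c ^ N * (Phi s t Q * e - e * Phi s t Q) * c ^ N = 0 := by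
        rw [mul_sub, ← mul_assoc, hc.eq, h, zero_mul, zero_sub, neg_mul, mul_assoc, mul_assoc, h,
          mul_zero, mul_zero, neg_zero]
      rw [Phi_deriv hse hct hte, ← mul_assoc, hc'.eq, mul_assoc, mul_assoc] at h3
      rw [pow_add, pow_succ]
      simpa only [mul_assoc] using h3
    obtain ⟨N', h4⟩ := ih _ _ ((natDegree_derivative_le Q).trans (by omega)) h2
    refine ⟨N', ?_⟩
    rw [coeff_derivative] at h4
    have h5 : (Q.coeff (n+1) * ((n:ℂ[X]) + 1)) = ((n:ℂ) + 1) • Q.coeff (n+1) := by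
      rw [Polynomial.smul_eq_C_mul, mul_comm]
      simp
    rw [h5, map_smul, smul_mul_assoc] at h4
    exact (smul_eq_zero.1 h4).resolve_left (by exact_mod_cast Nat.succ_ne_zero n)

end

end abstract_algebra

section HDsec

variable {V : Type*} [AddCommGroup V] [Module ℂ V] (W : VertexAlgebra V)

/-- derivations commuting with `T` -/
def HD : Submodule ℂ (Module.End ℂ V) where
  carrier := {d | (∀ x, d (W.D x) = W.D (d x)) ∧
    ∀ n x y, d (W.P n x y) = W.P n (d x) y + W.P n x (d y)}
  add_mem' := by
    rintro a b ⟨h1, h2⟩ ⟨h3, h4⟩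
    refine ⟨fun x => by simp [h1, h3], fun n x y => ?_⟩
    simp only [LinearMap.add_apply, h2, h4, map_add]
    abel
  zero_mem' := by simp
  smul_mem' := by
    rintro c a ⟨h1, h2⟩
    refine ⟨fun x => by simp [h1], fun n x y => ?_⟩
    simp [h2]

theorem D_mem : W.D ∈ W.HD := ⟨fun _ => rfl, fun n x y => W.D_deriv n x y⟩

variable {W}

theorem HD_comm {d : Module.End ℂ V} (hd : d ∈ W.HD) : Commute W.D d :=
  LinearMap.ext fun x => (hd.1 x).symm

theorem HD_bracket {d e : Module.End ℂ V} (hd : d ∈ W.HD) (he : e ∈ W.HD) :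
    d * e - e * d ∈ W.HD := by
  refine ⟨fun x => by simp [hd.1, he.1], fun n x y => ?_⟩
  simp only [LinearMap.sub_apply, Module.End.mul_apply, hd.2, he.2, map_add, map_sub]
  abel

theorem HD_pow_D {d : Module.End ℂ V} (hd : d ∈ W.HD) (k : ℕ) (x : V) :
    (d ^ k) (W.D x) = W.D ((d ^ k) x) :=
  LinearMap.congr_fun ((HD_comm hd).pow_right k).eq.symm x

theorem HD_leib {d : Module.End ℂ V} (hd : d ∈ W.HD) (x w : V) (n : ℤ) (hx : d (d x) = 0)
    (k : ℕ) : (d ^ (k + 1)) (W.P n x w) = W.P n x ((d ^ (k + 1)) w)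
      + ((k : ℂ) + 1) • W.P n (d x) ((d ^ k) w) := by
  induction k with
  | zero =>
    simp [hd.2]
    abel
  | succ k ih =>
    have e1 : ∀ (j : ℕ) (v : V), (d ^ (j + 1)) v = d ((d ^ j) v) := by
      intro j v; rw [pow_succ', Module.End.mul_apply]
    rw [e1 (k + 1), ih, map_add, map_smul, hd.2, hd.2, hx, e1 (k + 1) w, e1 k w]
    simp only [map_zero, LinearMap.zero_apply, zero_add]
    push_cast
    module

theorem Dom.exists (hD : W.Dom) {x y : V} (hx : x ≠ 0) (hy : y ≠ 0) : ∃ n, W.P n x y ≠ 0 := by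
  by_contra! h
  rcases hD x y h with h | h
  · exact hx h
  · exact hy h

theorem L23 (hfin : W.IsFinite) (hD : W.Dom) {d : Module.End ℂ V} (hd : d ∈ W.HD) (x : V)
    (hx : d (d x) = 0) : d x = 0 := by
  by_contra hu
  have claim : ∀ m : ℕ, ∃ w, (d ^ m) w ≠ 0 ∧ (d ^ (m + 1)) w = 0 := by
    intro m
    induction m with
    | zero => exact ⟨d x, by simpa using hu, by simpa using hx⟩
    | succ m ih =>
      obtain ⟨w, hw, hw'⟩ := ih
      obtain ⟨n, hn⟩ := hD.exists hu hw
      refine ⟨W.P n x w, ?_, ?_⟩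
      · rw [HD_leib hd x w n hx, hw', map_zero, zero_add]
        exact smul_ne_zero (by exact_mod_cast Nat.succ_ne_zero m) hn
      · rw [HD_leib hd x w n hx, hw', pow_succ', Module.End.mul_apply, hw']
        simp
  obtain ⟨m, hm⟩ := W.chain hfin (fun m => LinearMap.ker (d ^ m)) (by
    intro m x hx
    rw [LinearMap.mem_ker] at hx ⊢
    rw [pow_succ', Module.End.mul_apply, hx, map_zero]) (by
    intro m x hx
    rw [LinearMap.mem_ker] at hx ⊢
    rw [HD_pow_D hd, hx, map_zero])
  obtain ⟨w, hw, hw'⟩ := claim m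
  exact hw (hm hw')

theorem L23' (hfin : W.IsFinite) (hD : W.Dom) {d : Module.End ℂ V} (hd : d ∈ W.HD) (N : ℕ) :
    ∀ x, (d ^ N) x = 0 → d x = 0 := by
  induction N with
  | zero => intro x hx; simp at hx; rw [hx, map_zero]
  | succ N ih =>
    intro x hx
    apply L23 hfin hD hd
    apply ih
    simpa [pow_succ] using hx

theorem HD_nil (hfin : W.IsFinite) (hD : W.Dom) {d : Module.End ℂ V} (hd : d ∈ W.HD) (N : ℕ)
    (h : d ^ N = 0) : d = 0 :=
  LinearMap.ext fun x => L23' hfin hD hd N x (by rw [h]; rfl)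

theorem L4 (hfin : W.IsFinite) (hD : W.Dom) {d : Module.End ℂ V} (hd : d ∈ W.HD) (e : ℂ)
    (he : e ≠ 0) (y : V) (hy : d y = e • y) : y = 0 := by
  by_contra hu
  have claim : ∀ m : ℕ, ∃ w, w ≠ 0 ∧ d w = (((m : ℂ) + 1) * e) • w := by
    intro m
    induction m with
    | zero => exact ⟨y, hu, by simpa using hy⟩
    | succ m ih =>
      obtain ⟨w, hw, hw'⟩ := ih
      obtain ⟨n, hn⟩ := hD.exists hu hw
      refine ⟨W.P n y w, hn, ?_⟩
      rw [hd.2, hy, hw']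
      simp only [map_smul, LinearMap.smul_apply]
      push_cast
      module
  let q : ℕ → ℂ[X] := fun m => ∏ i ∈ range m, (X - C (((i : ℂ) + 1) * e))
  have hev : ∀ (p : ℂ[X]) (w : V) (μ : ℂ), d w = μ • w → aeval d p w = p.eval μ • w := by
    intro p w μ h
    have hp : ∀ n : ℕ, (d ^ n) w = μ ^ n • w := by
      intro n
      induction n with
      | zero => simp
      | succ n ih => rw [pow_succ', Module.End.mul_apply, ih, map_smul, h, smul_smul, pow_succ]
    induction p using Polynomial.induction_on' with
    | add p q hp hq => rw [map_add, LinearMap.add_apply, hp, hq, eval_add, add_smul]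
    | monomial n a => simp [aeval_monomial, hp, smul_smul, mul_comm]
  obtain ⟨m, hm⟩ := W.chain hfin (fun m => LinearMap.ker (aeval d (q m))) (by
    intro m x hx
    rw [LinearMap.mem_ker] at hx ⊢
    have : q (m + 1) = (X - C (((m : ℂ) + 1) * e)) * q m := by
      simp only [q]; rw [prod_range_succ, mul_comm]
    rw [this, map_mul, Module.End.mul_apply, hx, map_zero]) (by
    intro m x hx
    rw [LinearMap.mem_ker] at hx ⊢
    have := LinearMap.congr_fun (comm_aeval (HD_comm hd) (q m)).eq x
    rw [Module.End.mul_apply, Module.End.mul_apply, hx, map_zero] at this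
    exact this.symm)
  obtain ⟨w, hw, hw'⟩ := claim m
  have h1 : w ∈ LinearMap.ker (aeval d (q (m + 1))) := by
    rw [LinearMap.mem_ker, hev _ w _ hw']
    simp [q, eval_prod, prod_range_succ]
  have h2 := hm h1
  rw [LinearMap.mem_ker, hev _ w _ hw', smul_eq_zero] at h2
  rcases h2 with h2 | h2
  · simp only [q, eval_prod, prod_eq_zero_iff, mem_range] at h2
    obtain ⟨i, hi, h3⟩ := h2
    simp only [eval_sub, eval_X, eval_C] at h3
    rw [← sub_mul] at h3
    have := (mul_eq_zero.1 h3).resolve_right he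
    have h4 : (m : ℂ) = i := by linear_combination this
    have : m = i := by exact_mod_cast h4
    omega
  · exact hw h2

theorem L5 (hfin : W.IsFinite) (hD : W.Dom) {d : Module.End ℂ V} (hd : d ∈ W.HD) (q : ℂ[X])
    (hq : q ≠ 0) (x : V) (h : aeval d q x = 0) : d x = 0 :=
  abs_lem d ⊤ (fun _ _ => trivial) (fun e he x _ hx => L4 hfin hD hd e he x hx)
    (fun x _ hx => L23 hfin hD hd x hx) _ q rfl hq x trivial h

theorem L1 (hfin : W.IsFinite) (hD : W.Dom) (x : V) (hx : W.D x = 0) : ∃ α : ℂ, x = α • W.vac := by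
  by_cases hv : W.vac = 0
  · refine ⟨0, ?_⟩
    rw [← W.creation x, hv]; simp
  have hP : ∀ n : ℤ, n ≠ -1 → ∀ b, W.P n x b = 0 := by
    intro n hn b
    have := W.transl_inv (n + 1) x b
    rw [hx] at this
    simp only [map_zero, LinearMap.zero_apply, add_sub_cancel_right] at this
    refine (smul_eq_zero.1 this.symm).resolve_left ?_
    push_cast
    intro h
    apply hn
    have : (n : ℂ) = ((-1 : ℤ) : ℂ) := by push_cast; linear_combination -h
    exact_mod_cast this
  let g : Module.End ℂ V := W.P (-1) x
  have hg : Commute W.D g := by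
    refine LinearMap.ext fun y => ?_
    change W.D (W.P (-1) x y) = W.P (-1) x (W.D y)
    rw [W.D_deriv, hx]; simp
  let ev : ℂ[X] →ₗ[ℂ] V := (LinearMap.applyₗ (R := ℂ) W.vac) ∘ₗ (aeval g).toLinearMap
  have hev : ∀ p, ev p = aeval g p W.vac := fun p => rfl
  obtain ⟨m, hm⟩ := W.chain hfin (fun m => (degreeLT ℂ m).map ev) (by
    intro m
    exact Submodule.map_mono (degreeLT_mono (by omega))) (by
    rintro m _ ⟨p, hp, rfl⟩
    have := LinearMap.congr_fun (comm_aeval hg p).eq W.vac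
    rw [Module.End.mul_apply, Module.End.mul_apply, W.D_vac, map_zero] at this
    rw [hev, this]
    exact Submodule.zero_mem _)
  have h1 : ev (X ^ m) ∈ (degreeLT ℂ (m + 1)).map ev :=
    ⟨X ^ m, by rw [SetLike.mem_coe, mem_degreeLT, degree_X_pow]; exact_mod_cast Nat.lt_succ_self m, rfl⟩
  obtain ⟨p, hp, hp'⟩ := hm h1
  have hne : X ^ m - p ≠ 0 := by
    intro h0
    rw [SetLike.mem_coe, mem_degreeLT, ← sub_eq_zero.1 h0, degree_X_pow] at hp
    exact lt_irrefl _ hp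
  obtain ⟨w, α, hw, hw'⟩ := exists_eig g _ (X ^ m - p) rfl hne W.vac hv (by
    rw [← hev, map_sub, hp', sub_self])
  refine ⟨α, ?_⟩
  have := hD (x - α • W.vac) w (by
    intro n
    simp only [map_sub, map_smul, LinearMap.sub_apply, LinearMap.smul_apply, W.vac_field]
    by_cases hn : n = -1
    · subst hn
      simp only [if_true]
      exact sub_eq_zero.2 hw'
    · simp [hn, hP n hn])
  exact sub_eq_zero.1 (this.resolve_right hw)

theorem torsion (hfin : W.IsFinite) (hD : W.Dom) (q : ℂ[X])
    (hq : q ≠ 0) (x : V) (h : aeval W.D q x = 0) : ∃ α : ℂ, x = α • W.vac :=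
  L1 hfin hD x (L5 hfin hD W.D_mem q hq x h)

theorem monic_rel (hfin : W.IsFinite) {d : Module.End ℂ V} (hd : d ∈ W.HD) :
    ∃ Q : ℂ[X][X], Q.Monic ∧ Phi W.D d Q = 0 := by
  letI := W.polyModule
  have := W.noeth hfin
  let f : V →ₗ[ℂ[X]] V :=
    { toFun := d
      map_add' := d.map_add
      map_smul' := by
        intro p x
        exact (LinearMap.congr_fun (comm_aeval (HD_comm hd).symm p).eq x) }
  obtain ⟨Q, hQ, h⟩ := LinearMap.exists_monic_and_aeval_eq_zero ℂ[X] f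
  refine ⟨Q, hQ, ?_⟩
  have key : ∀ (Q : ℂ[X][X]) (x : V), Phi W.D d Q x = aeval f Q x := by
    intro Q x
    have hf : ∀ n : ℕ, (f ^ n) x = (d ^ n) x := by
      intro n
      induction n with
      | zero => rfl
      | succ n ih => rw [pow_succ', pow_succ', Module.End.mul_apply, Module.End.mul_apply, ih]; rfl
    induction Q using Polynomial.induction_on' with
    | add p q hp hq => rw [map_add, Phi_add, LinearMap.add_apply, LinearMap.add_apply, hp, hq]
    | monomial n a =>
      rw [Phi_monomial, aeval_monomial, Module.End.mul_apply, Module.End.mul_apply, hf]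
      rfl
  ext x
  rw [key, h]; rfl

theorem B1 (hfin : W.IsFinite) (hD : W.Dom) {d b : Module.End ℂ V} (hd : d ∈ W.HD) (hb : b ∈ W.HD)
    (ρ : ℂ) (hρ : ρ ≠ 0) (h : d * b - b * d = ρ • b) : b = 0 := by
  obtain ⟨Q, hQ, h1⟩ := monic_rel hfin hb
  obtain ⟨N, hN⟩ := Kl (s := W.D) (t := b) (e := -(ρ⁻¹ • d)) (c := b) (HD_comm hb)
    ((HD_comm hd).smul_right _).neg_right (Commute.refl _) (by
      have : b * -(ρ⁻¹ • d) - -(ρ⁻¹ • d) * b = ρ⁻¹ • (d * b - b * d) := by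
        simp only [mul_neg, neg_mul, mul_smul_comm, smul_mul_assoc, smul_sub]
        abel
      rw [this, h, smul_smul, inv_mul_cancel₀ hρ, one_smul]) Q.natDegree 0 Q le_rfl (by simp [h1])
  rw [hQ.coeff_natDegree, map_one, one_mul] at hN
  exact HD_nil hfin hD hb N hN

theorem B2 (hfin : W.IsFinite) (hD : W.Dom) {d e : Module.End ℂ V} (hd : d ∈ W.HD) (he : e ∈ W.HD)
    (h : d * (d * e - e * d) - (d * e - e * d) * d = 0) : d * e - e * d = 0 := by
  obtain ⟨Q, hQ, h1⟩ := monic_rel hfin hd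
  have hc := HD_bracket hd he
  obtain ⟨N, hN⟩ := Kl (s := W.D) (t := d) (e := e) (c := d * e - e * d) (HD_comm hc)
    (HD_comm he) (sub_eq_zero.1 h).symm rfl Q.natDegree 0 Q le_rfl (by simp [h1])
  rw [hQ.coeff_natDegree, map_one, one_mul] at hN
  exact HD_nil hfin hD hc N hN

theorem AD (hfin : W.IsFinite) (hD : W.Dom) {d e : Module.End ℂ V} (hd : d ∈ W.HD) (he : e ∈ W.HD)
    (q : ℂ[X]) (hq : q ≠ 0)
    (h : aeval (LinearMap.mulLeft ℂ d - LinearMap.mulRight ℂ d) q e = 0) : d * e - e * d = 0 := by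
  have := abs_lem (LinearMap.mulLeft ℂ d - LinearMap.mulRight ℂ d) W.HD
    (fun x hx => HD_bracket hd hx) (fun ρ hρ b hb h => B1 hfin hD hd hb ρ hρ h)
    (fun b hb h => B2 hfin hD hd hb h) _ q rfl hq e he h
  exact this

end HDsec

end VertexAlgebra

namespace VertexAlgebra

open Finset Polynomial

section filt

variable {V : Type*} [AddCommGroup V] [Module ℂ V] (W : VertexAlgebra V)

/-- elements whose first `l` nonnegative modes vanish -/
def F (l : ℕ) : Submodule ℂ V where
  carrier := {b | ∀ j : ℕ, j < l → W.P j b = 0}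
  add_mem' := by
    intro a b ha hb j hj
    rw [map_add, ha j hj, hb j hj, add_zero]
  zero_mem' := by intro j _; simp
  smul_mem' := by
    intro c a ha j hj
    rw [map_smul, ha j hj, smul_zero]

variable {W}

theorem F_anti {l m : ℕ} (h : l ≤ m) : W.F m ≤ W.F l := fun _ hb j hj => hb j (by omega)

theorem mode_D (n : ℤ) (b : V) : W.P n (W.D b) = (-n : ℂ) • W.P (n - 1) b :=
  LinearMap.ext fun x => W.transl_inv n b x

theorem mode_D_nat (l : ℕ) (b : V) :
    W.P ((l + 1 : ℕ) : ℤ) (W.D b) = (-((l : ℂ) + 1)) • W.P (l : ℤ) b := by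
  rw [mode_D]
  push_cast
  rw [add_sub_cancel_right]

theorem D_F {l : ℕ} {b : V} (hb : b ∈ W.F l) : W.D b ∈ W.F (l + 1) := by
  intro j hj
  rcases j with _ | j
  · rw [mode_D]; simp
  · rw [mode_D_nat, hb j (by omega), smul_zero]

theorem D_inj {l : ℕ} {b : V} (hb : b ∈ W.F l) (h : W.D b ∈ W.F (l + 2)) : b ∈ W.F (l + 1) := by
  intro j hj
  by_cases hj' : j < l
  · exact hb j hj'
  · have : j = l := by omega
    subst this
    have := h (j + 1) (by omega)
    rw [mode_D_nat] at this
    refine (smul_eq_zero.1 this).resolve_left ?_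
    rw [← ne_eq, neg_ne_zero]
    exact_mod_cast Nat.succ_ne_zero j

theorem mem_F_succ {l : ℕ} {b : V} (hb : b ∈ W.F l) (h : W.P l b = 0) : b ∈ W.F (l + 1) := by
  intro j hj
  by_cases hj' : j < l
  · exact hb j hj'
  · have : j = l := by omega
    rw [this, h]

theorem top_HD {l : ℕ} {b : V} (hb : b ∈ W.F l) : W.P l b ∈ W.HD := by
  refine ⟨fun x => ?_, fun k x y => ?_⟩
  · rw [W.D_deriv]
    have : W.P l (W.D b) = 0 := D_F hb l (by omega)
    rw [this]; simp
  · have := W.comm_nat l k b x y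
    rw [sum_range_succ, sum_eq_zero] at this
    · simp at this
      rw [← this]; abel
    · intro j hj
      rw [hb j (by simpa using hj)]; simp

theorem HD_mode {d : Module.End ℂ V} (hd : d ∈ W.HD) (n : ℤ) (b : V) :
    W.P n (d b) = d * W.P n b - W.P n b * d := by
  ext x
  simp only [LinearMap.sub_apply, Module.End.mul_apply, hd.2]
  abel

theorem HD_F {d : Module.End ℂ V} (hd : d ∈ W.HD) {l : ℕ} {b : V} (hb : b ∈ W.F l) :
    d b ∈ W.F l := by
  intro j hj
  rw [HD_mode hd, hb j hj]; simp

theorem D_pow_F (n : ℕ) {l : ℕ} {b : V} (hb : b ∈ W.F l) : (W.D ^ n) b ∈ W.F (l + n) := by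
  induction n with
  | zero => simpa using hb
  | succ n ih => rw [pow_succ']; exact D_F ih

theorem top_aeval {l : ℕ} {x : V} (hx : x ∈ W.F l) (q : ℂ[X]) :
    W.P l (aeval W.D q x) = q.eval 0 • W.P l x := by
  induction q using Polynomial.induction_on' with
  | add p q hp hq => simp [add_smul, hp, hq]
  | monomial n a =>
    rcases n with _ | n
    · simp
    · rw [aeval_monomial]
      have h1 : W.P l ((W.D ^ (n + 1)) x) = 0 := D_pow_F (n + 1) hx l (by omega)
      simp [h1]

theorem top_Phi {d : Module.End ℂ V} (hd : d ∈ W.HD) {l : ℕ} {b : V} (hb : b ∈ W.F l)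
    (Q : ℂ[X][X]) :
    W.P l (Phi W.D d Q b) =
      aeval (LinearMap.mulLeft ℂ d - LinearMap.mulRight ℂ d) (Q.map (evalRingHom 0)) (W.P l b) := by
  induction Q using Polynomial.induction_on' with
  | add p q hp hq => simp only [Phi_add, LinearMap.add_apply, map_add, hp, hq, Polynomial.map_add]
  | monomial n a =>
    have h1 : ∀ n : ℕ, (d ^ n) b ∈ W.F l ∧ W.P l ((d ^ n) b) =
        ((LinearMap.mulLeft ℂ d - LinearMap.mulRight ℂ d) ^ n) (W.P l b) := by
      intro n
      induction n with
      | zero => exact ⟨by simpa using hb, by simp⟩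
      | succ n ih =>
        refine ⟨by rw [pow_succ']; exact HD_F hd ih.1, ?_⟩
        rw [pow_succ', pow_succ', Module.End.mul_apply, Module.End.mul_apply, HD_mode hd, ih.2]
        rfl
    rw [Phi_monomial, Module.End.mul_apply, top_aeval (h1 n).1, (h1 n).2, map_monomial,
      aeval_monomial]
    simp

theorem dF (hfin : W.IsFinite) (hD : W.Dom) {d : Module.End ℂ V} (hd : d ∈ W.HD)
    {l : ℕ} {b : V} (hb : b ∈ W.F l) : d b ∈ W.F (l + 1) := by
  obtain ⟨Q, hQ, h⟩ := monic_rel hfin hd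
  have h1 := top_Phi hd hb Q
  rw [h, LinearMap.zero_apply, map_zero] at h1
  have h2 := AD hfin hD hd (top_HD hb) _ (hQ.map (evalRingHom 0)).ne_zero h1.symm
  apply mem_F_succ (HD_F hd hb)
  rw [HD_mode hd, h2]

theorem d_pow_F (hfin : W.IsFinite) (hD : W.Dom) {d : Module.End ℂ V} (hd : d ∈ W.HD) (n : ℕ)
    {l : ℕ} {b : V} (hb : b ∈ W.F l) : (d ^ n) b ∈ W.F (l + n) := by
  induction n with
  | zero => simpa using hb
  | succ n ih => rw [pow_succ']; exact dF hfin hD hd ih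

/-- homogenization -/
noncomputable def Hom {R : Type*} [Ring R] [Algebra ℂ R] (T d : R) (k : ℕ) (h : ℂ[X]) : R :=
  ∑ p ∈ antidiagonal k, h.coeff p.2 • (T ^ p.1 * d ^ p.2)

theorem Hom_T {R : Type*} [Ring R] [Algebra ℂ R] (T d : R) (k : ℕ) (h : ℂ[X])
    (hk : h.natDegree ≤ k) : Hom T d (k + 1) h = T * Hom T d k h := by
  rw [Hom, Nat.sum_antidiagonal_succ, coeff_eq_zero_of_natDegree_lt (by simpa using by omega),
    zero_smul, zero_add, Hom, mul_sum]
  apply sum_congr rfl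
  intro p _
  rw [mul_smul_comm, pow_succ', mul_assoc]

theorem Hom_X {R : Type*} [Ring R] [Algebra ℂ R] {T d : R} (hc : Commute T d) (k : ℕ) (h : ℂ[X]) :
    Hom T d (k + 1) (X * h) = d * Hom T d k h := by
  rw [Hom, Nat.sum_antidiagonal_succ']
  simp only [coeff_X_mul_zero, zero_smul, zero_add, coeff_X_mul, Hom, mul_sum]
  apply sum_congr rfl
  intro p _
  rw [mul_smul_comm, pow_succ', ← mul_assoc, ← mul_assoc, (hc.pow_left p.1).eq]

theorem Hom_sub {R : Type*} [Ring R] [Algebra ℂ R] (T d : R) (k : ℕ) (g h : ℂ[X]) :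
    Hom T d k (g - h) = Hom T d k g - Hom T d k h := by
  simp [Hom, sub_smul]

theorem Hom_C {R : Type*} [Ring R] [Algebra ℂ R] (T d : R) (k : ℕ) (s : ℂ) (h : ℂ[X]) :
    Hom T d k (C s * h) = s • Hom T d k h := by
  simp [Hom, smul_sum, smul_smul]

theorem Hom_nz {d : Module.End ℂ V} (hd : d ∈ W.HD)
    (hneg : ∀ (l : ℕ) (c : V) (s : ℂ), c ∈ W.F l → c ∉ W.F (l + 1) →
      (d - s • W.D) c ∉ W.F (l + 2)) (hpos : ∀ (l : ℕ) (c : V) (s : ℂ), c ∈ W.F l →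
      (d - s • W.D) c ∈ W.F (l + 1)) (l : ℕ) (c : V) (hc : c ∈ W.F l) (hc' : c ∉ W.F (l + 1))
    (k : ℕ) : ∀ h : ℂ[X], h ≠ 0 → h.natDegree ≤ k → Hom W.D d k h c ∈ W.F (l + k) ∧
      Hom W.D d k h c ∉ W.F (l + k + 1) := by
  induction k with
  | zero =>
    intro h h0 hk
    rw [eq_C_of_natDegree_le_zero hk] at h0 ⊢
    have h1 : h.coeff 0 ≠ 0 := by
      intro h2; rw [h2] at h0; simp at h0
    simp only [Hom, Nat.antidiagonal_zero, sum_singleton, coeff_C_zero, pow_zero, mul_one,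
      LinearMap.smul_apply, Module.End.one_apply, add_zero]
    exact ⟨Submodule.smul_mem _ _ hc, fun h => hc' ((Submodule.smul_mem_iff _ h1).1 h)⟩
  | succ k ih =>
    intro h h0 hk
    by_cases hk' : h.natDegree ≤ k
    · rw [Hom_T _ _ _ _ hk', Module.End.mul_apply]
      obtain ⟨h1, h2⟩ := ih h h0 hk'
      exact ⟨D_F h1, fun h3 => h2 (D_inj h1 h3)⟩
    · obtain ⟨e, he⟩ := IsAlgClosed.exists_root h (by
        intro h1
        rw [Polynomial.degree_eq_natDegree h0] at h1
        norm_cast at h1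
        omega)
      obtain ⟨q, rfl⟩ := Polynomial.dvd_iff_isRoot.2 he
      have hq : q ≠ 0 := right_ne_zero_of_mul h0
      have hdg : q.natDegree ≤ k := by
        rw [Polynomial.natDegree_mul (X_sub_C_ne_zero e) hq, natDegree_X_sub_C] at hk
        omega
      have : Hom W.D d (k + 1) ((X - C e) * q) = (d - e • W.D) * Hom W.D d k q := by
        rw [sub_mul, Hom_sub, Hom_X (HD_comm hd), Hom_C, Hom_T _ _ _ _ hdg, sub_mul,
          smul_mul_assoc]
      rw [this, Module.End.mul_apply]
      obtain ⟨h1, h2⟩ := ih q hq hdg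
      exact ⟨hpos _ _ e h1, hneg _ _ e h1 h2⟩

theorem exists_low (hfin : W.IsFinite) (hD : W.Dom) {d : Module.End ℂ V} (hd : d ∈ W.HD)
    (l : ℕ) (c : V) (hc : c ∈ W.F l) (hc' : c ∉ W.F (l + 1)) :
    ∃ (l : ℕ) (c : V) (s : ℂ), c ∈ W.F l ∧ c ∉ W.F (l + 1) ∧ (d - s • W.D) c ∈ W.F (l + 2) := by
  by_contra! hneg
  have key := Hom_nz hd hneg (fun l c s hc => by
    rw [LinearMap.sub_apply, LinearMap.smul_apply]
    exact Submodule.sub_mem _ (dF hfin hD hd hc) (Submodule.smul_mem _ _ (D_F hc))) l c hc hc'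
  obtain ⟨Q, hQ, h⟩ := monic_rel hfin hd
  let q : ℕ → ℕ → ℂ := fun i j => (Q.coeff j).coeff i
  have hex : ∃ k, ∃ i j, i + j = k ∧ q i j ≠ 0 := by
    refine ⟨_, 0, Q.natDegree, rfl, ?_⟩
    simp [q, hQ.coeff_natDegree]
  classical
  obtain ⟨i0, j0, hij, hq0⟩ := Nat.find_spec hex
  set k := Nat.find hex with hk
  have hmin : ∀ i j, i + j < k → q i j = 0 := by
    intro i j hij
    by_contra hne
    exact Nat.find_min hex hij ⟨i, j, rfl, hne⟩
  let hp : ℂ[X] := ∑ p ∈ antidiagonal k, monomial p.2 (q p.1 p.2)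
  have hcoef : ∀ p ∈ antidiagonal k, hp.coeff p.2 = q p.1 p.2 := by
    intro p hpk
    simp only [hp, finsetSum_coeff, coeff_monomial]
    rw [sum_eq_single p]
    · simp
    · intro b hb hne
      rw [if_neg]
      intro h1
      apply hne
      rw [HasAntidiagonal.mem_antidiagonal] at hb hpk
      ext <;> omega
    · intro hn; exact absurd hpk hn
  have hp0 : hp ≠ 0 := by
    intro h0
    have := hcoef (i0, j0) (by simpa using hij)
    rw [h0] at this
    exact hq0 (by simpa using this.symm)
  have hdeg : hp.natDegree ≤ k := by
    apply natDegree_sum_le_of_forall_le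
    intro p hpk
    rw [HasAntidiagonal.mem_antidiagonal] at hpk
    exact (natDegree_monomial_le _).trans (by omega)
  obtain ⟨-, hn⟩ := key k hp hp0 hdeg
  apply hn
  obtain ⟨N, hN1, hN2, hN3⟩ : ∃ N, k < N ∧ Q.natDegree < N ∧ ∀ j, (Q.coeff j).natDegree < N := by
    refine ⟨k + Q.natDegree + (∑ j ∈ range (Q.natDegree + 1), (Q.coeff j).natDegree) + 1,
      by omega, by omega, fun j => ?_⟩
    by_cases hj : j < Q.natDegree + 1
    · have := single_le_sum (f := fun j => (Q.coeff j).natDegree) (fun _ _ => Nat.zero_le _)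
        (mem_range.2 hj)
      omega
    · rw [coeff_eq_zero_of_natDegree_lt (by omega)]
      simp only [natDegree_zero]
      omega
  have hsum : Phi W.D d Q c =
      ∑ p ∈ range N ×ˢ range N, q p.1 p.2 • (W.D ^ p.1 * d ^ p.2) c := by
    rw [sum_product_right, Phi, eval₂_eq_sum_range' _ hN2, LinearMap.sum_apply]
    apply sum_congr rfl
    intro j _
    have := aeval_eq_sum_range' (hN3 j) W.D
    simp only [AlgHom.toRingHom_eq_coe, RingHom.coe_coe, this]
    rw [sum_mul, LinearMap.sum_apply]
    apply sum_congr rfl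
    intro i _
    rw [smul_mul_assoc]; rfl
  rw [h, LinearMap.zero_apply, ← sum_filter_add_sum_filter_not _ (fun p => p.1 + p.2 = k)] at hsum
  have h1 : (range N ×ˢ range N).filter (fun p => p.1 + p.2 = k) = antidiagonal k := by
    ext p
    simp only [mem_filter, mem_product, mem_range, HasAntidiagonal.mem_antidiagonal]
    constructor
    · exact fun h => h.2
    · intro h; exact ⟨by omega, h⟩
  have h2 : Hom W.D d k hp c = ∑ p ∈ antidiagonal k, q p.1 p.2 • (W.D ^ p.1 * d ^ p.2) c := by
    rw [Hom, LinearMap.sum_apply]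
    apply sum_congr rfl
    intro p hpk
    rw [hcoef p hpk]; rfl
  rw [h1, ← h2] at hsum
  rw [eq_neg_of_add_eq_zero_left hsum.symm]
  apply Submodule.neg_mem
  apply Submodule.sum_mem
  intro p hpf
  rw [mem_filter] at hpf
  by_cases hlt : p.1 + p.2 < k
  · rw [hmin _ _ hlt, zero_smul]; exact Submodule.zero_mem _
  · apply Submodule.smul_mem
    rw [Module.End.mul_apply]
    exact F_anti (by omega) (D_pow_F p.1 (d_pow_F hfin hD hd p.2 hc))

theorem Phi_swap {R : Type*} [Ring R] [Algebra ℂ R] {s t : R} (hst : Commute s t) (Q : ℂ[X][X]) :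
    Phi s t (Bivariate.swap Q) = Phi t s Q := by
  induction Q using Polynomial.induction_on' with
  | add p q hp hq => rw [map_add, Phi_add, Phi_add, hp, hq]
  | monomial n a =>
    induction a using Polynomial.induction_on' with
    | add p q hp hq => rw [map_add, map_add, Phi_add, Phi_add, hp, hq]
    | monomial m z =>
      have : Bivariate.swap (monomial n (monomial m z : ℂ[X])) = monomial m (monomial n z) :=
        Bivariate.swap_monomial_monomial n m z
      rw [this, Phi_monomial, Phi_monomial, aeval_monomial, aeval_monomial, mul_assoc, mul_assoc,
        (hst.pow_pow n m).eq]

theorem prod_lem (hfin : W.IsFinite) (hD : W.Dom) {d e : Module.End ℂ V} (hd : d ∈ W.HD)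
    (he : e ∈ W.HD) (h1 : ∀ x, d (e x) = 0) (h2 : ∀ x, e (d x) = 0) (he0 : e ≠ 0) : d = 0 := by
  by_contra hd0
  obtain ⟨y1, hy1⟩ : ∃ y, e y ≠ 0 := by
    by_contra! h; exact he0 (LinearMap.ext h)
  obtain ⟨x1, hx1⟩ : ∃ y, d y ≠ 0 := by
    by_contra! h; exact hd0 (LinearMap.ext h)
  obtain ⟨n, hn⟩ := hD.exists (x := d (d x1)) (y := e (e y1))
    (fun h => hx1 (L23 hfin hD hd _ h)) (fun h => hy1 (L23 hfin hD he _ h))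
  apply hn
  have := h2 (W.P n (d x1) (e y1))
  rw [hd.2, h1, map_zero, add_zero, he.2, h2] at this
  simpa using this

theorem mainM (hfin : W.IsFinite) (hD : W.Dom) (l : ℕ) (c : V) (hc : c ∈ W.F l)
    (hc' : c ∉ W.F (l + 1)) {d : Module.End ℂ V} (hd : d ∈ W.HD) : ∃ s : ℂ, d = s • W.D := by
  obtain ⟨l, c, s, hc, hc', hlow⟩ := exists_low hfin hD hd l c hc hc'
  refine ⟨s, ?_⟩
  have hd' : d - s • W.D ∈ W.HD := Submodule.sub_mem _ hd (Submodule.smul_mem _ _ W.D_mem)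
  set d' := d - s • W.D with hd'def
  have hδ : W.P l c ∈ W.HD := top_HD hc
  have hδ0 : W.P l c ≠ 0 := fun h => hc' (mem_F_succ hc h)
  have e1 : d' * W.P l c - W.P l c * d' = 0 := by
    rw [← HD_mode hd']; exact hlow l (by omega)
  have e2 : d' * W.P ((l + 1 : ℕ) : ℤ) c - W.P ((l + 1 : ℕ) : ℤ) c * d' = 0 := by
    rw [← HD_mode hd']; exact hlow (l + 1) (by omega)
  have e3 : W.D * W.P ((l + 1 : ℕ) : ℤ) c - W.P ((l + 1 : ℕ) : ℤ) c * W.D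
      = (-((l : ℂ) + 1)) • W.P l c := by
    rw [← HD_mode W.D_mem, mode_D_nat]
  have hl : -((l : ℂ) + 1) ≠ 0 := by
    rw [neg_ne_zero]; exact_mod_cast Nat.succ_ne_zero l
  set δ := (-((l : ℂ) + 1)) • W.P l c with hδdef
  have hδ' : δ ∈ W.HD := Submodule.smul_mem _ _ hδ
  have hδ'0 : δ ≠ 0 := smul_ne_zero hl hδ0
  have hcom : Commute d' δ := Commute.smul_right (sub_eq_zero.1 e1) _
  obtain ⟨Q, hQ, h⟩ := monic_rel hfin hd'
  have hQ' : Bivariate.swap Q ≠ 0 := by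
    rw [ne_eq, map_eq_zero_iff _ (Bivariate.swap (R := ℂ)).injective]
    exact hQ.ne_zero
  obtain ⟨N, hN⟩ := Kl (s := d') (t := W.D) (e := W.P ((l + 1 : ℕ) : ℤ) c) (c := δ) hcom
    (sub_eq_zero.1 e2) (HD_comm hδ').symm e3 _ 0 (Bivariate.swap Q) le_rfl (by
      rw [Phi_swap (HD_comm hd').symm, h, zero_mul])
  have hz : ∀ x, δ (d' x) = 0 := by
    intro x
    apply L23' hfin hD hδ' N
    have h1 := LinearMap.congr_fun hN x
    have h2 := L5 hfin hD hd' _ (leadingCoeff_ne_zero.2 hQ') _ h1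
    have h3 := LinearMap.congr_fun (hcom.pow_right N).eq x
    rw [Module.End.mul_apply, Module.End.mul_apply] at h3
    rw [← h3, h2]
  have := prod_lem hfin hD hd' hδ' (fun x => by
    have h3 := LinearMap.congr_fun hcom.eq x
    rw [Module.End.mul_apply, Module.End.mul_apply] at h3
    rw [h3, hz]) hz hδ'0
  rw [hd'def, sub_eq_zero] at this
  exact this

end filt

end VertexAlgebra

namespace VertexAlgebra

open Finset Polynomial

section polys

theorem hasse_X_mul (s : ℕ) (f : ℂ[X]) :
    hasseDeriv (s + 1) (X * f) = X * hasseDeriv (s + 1) f + hasseDeriv s f := by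
  ext n
  rw [coeff_add, hasseDeriv_coeff, hasseDeriv_coeff, ← add_assoc, coeff_X_mul]
  rcases n with _ | n
  · simp
  · rw [coeff_X_mul, hasseDeriv_coeff, show n + 1 + s + 1 = (n + s + 1) + 1 by ring,
      Nat.choose_succ_succ, show n + 1 + s = n + s + 1 by ring, show n + (s + 1) = n + s + 1 by ring]
    push_cast
    ring

theorem poly_arg (n : ℕ) (p : ℕ → ℂ[X]) (h0 : ∀ j < n, p j = 0) (hn : p n = X)
    (hfin : ∃ N, ∀ k ≥ N, p k = 0)
    (hF : ∀ k : ℕ, p (n + 1) * p k + C ((n : ℂ) + 1) * (X * derivative (p k))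
      - ∑ s ∈ range (k + 1), C (k.descFactorial s : ℂ) * (hasseDeriv s (p (n + 1)) * p (k - s))
      = - (C (((n : ℂ) + 1) * (k + 1)) * p k)
        + ∑ s ∈ range (k + 1), C ((p (n + 1)).coeff s * (-1) ^ s * (k.descFactorial s : ℂ))
            * p (k - s)) :
    p (n + 1) = C (((n : ℂ) + 1) * (n + 2)) ∧ ∀ k > n + 1, p k = 0 := by
  set q := p (n + 1) with hq
  have hn1 : ((n : ℂ) + 1) ≠ 0 := by exact_mod_cast Nat.succ_ne_zero n
  have hF' : ∀ k : ℕ, C ((n : ℂ) + 1) * (X * derivative (p k)) + C (((n : ℂ) + 1) * (k + 1)) * p k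
      - C (q.coeff 0) * p k = ∑ s ∈ range k, C (k.descFactorial (s + 1) : ℂ) *
        (p (k - (s + 1)) * (hasseDeriv (s + 1) q + C ((-1) ^ (s + 1) * q.coeff (s + 1)))) := by
    intro k
    have h1 := hF k
    rw [sum_range_succ', sum_range_succ'] at h1
    simp only [Nat.descFactorial_zero, Nat.cast_one, C_1, one_mul, hasseDeriv_zero,
      LinearMap.id_apply, Nat.sub_zero, pow_zero, mul_one] at h1
    have h2 : ∑ s ∈ range k, C (k.descFactorial (s + 1) : ℂ) *
        (p (k - (s + 1)) * (hasseDeriv (s + 1) q + C ((-1) ^ (s + 1) * q.coeff (s + 1))))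
        = ∑ s ∈ range k, C (k.descFactorial (s + 1) : ℂ) *
          (hasseDeriv (s + 1) q * p (k - (s + 1)))
        + ∑ s ∈ range k, C (q.coeff (s + 1) * (-1) ^ (s + 1) * (k.descFactorial (s + 1) : ℂ))
            * p (k - (s + 1)) := by
      rw [← sum_add_distrib]
      apply sum_congr rfl
      intro s _
      simp only [map_mul]
      ring
    rw [h2]
    linear_combination h1
  have hpi0 : q.coeff 0 = ((n : ℂ) + 1) * (n + 2) := by
    have h1 := hF' n
    rw [sum_eq_zero] at h1
    · rw [hn] at h1
      have h2 := congrArg (fun f => coeff f 1) h1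
      simp at h2
      linear_combination -h2
    · intro s hs
      rw [mem_range] at hs
      rw [h0 (n - (s + 1)) (by omega)]
      simp
  have hpi1 : q.coeff 1 = 0 := by
    have h1 := hF' (n + 1)
    rw [sum_range_succ', sum_eq_zero] at h1
    · simp only [zero_add, Nat.add_sub_cancel, hn, ← hq, hpi0] at h1
      have h2 : C (((n : ℂ) + 1) * q.coeff 1) * X = 0 := by
        simp only [hasseDeriv_one, Nat.descFactorial_one, map_mul, map_add, Nat.cast_add,
          Nat.cast_one, pow_one, map_neg, map_one, map_ofNat] at h1 ⊢
        linear_combination h1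
      have e : ((n : ℂ) + 1) * q.coeff 1 = 0 := by
        simpa only [coeff_C_mul_X, if_true, coeff_zero] using congrArg (fun f => coeff f 1) h2
      exact (mul_eq_zero.1 e).resolve_left hn1
    · intro s hs
      rw [mem_range] at hs
      rw [h0 (n + 1 - (s + 1 + 1)) (by omega)]
      simp
  have hq0 : q ≠ 0 := by
    intro h
    rw [h, coeff_zero] at hpi0
    have : ((n : ℂ) + 2) ≠ 0 := by exact_mod_cast Nat.succ_ne_zero (n + 1)
    exact mul_ne_zero hn1 this hpi0.symm
  -- maximal index
  obtain ⟨K, hK, hKmax⟩ : ∃ K, p K ≠ 0 ∧ ∀ k > K, p k = 0 := by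
    obtain ⟨N, hN⟩ := hfin
    classical
    have hex : ∃ N, ∀ k > N, p k = 0 := ⟨N, fun k hk => hN k hk.le⟩
    refine ⟨Nat.find hex, ?_, Nat.find_spec hex⟩
    intro hz
    have hpos : n + 1 ≤ Nat.find hex := by
      by_contra hlt
      exact hq0 (Nat.find_spec hex _ (by omega))
    refine Nat.find_min hex (m := Nat.find hex - 1) (by omega) ?_
    intro k hk
    by_cases hk' : k = Nat.find hex
    · rw [hk', hz]
    · exact Nat.find_spec hex k (by omega)
  have hKn : n + 1 ≤ K := by
    by_contra hlt
    exact hq0 (hKmax _ (by omega))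
  have hdeg : q.natDegree = 0 := by
    by_contra he
    obtain ⟨e, hedef⟩ : ∃ e, q.natDegree = e + 1 := ⟨q.natDegree - 1, by omega⟩
    have hlead : q.coeff (e + 1) ≠ 0 := by
      rw [← hedef]; exact leadingCoeff_ne_zero.2 hq0
    have hbig : ∀ s, e + 1 < s → hasseDeriv s q + C ((-1) ^ s * q.coeff s) = 0 := by
      intro s hs
      rw [hasseDeriv_eq_zero_of_lt_natDegree _ _ (by omega),
        coeff_eq_zero_of_natDegree_lt (by omega)]
      simp
    have htop : hasseDeriv (e + 1) q = C (q.coeff (e + 1)) := by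
      ext m
      rw [hasseDeriv_coeff, coeff_C]
      rcases m with _ | m
      · simp
      · rw [coeff_eq_zero_of_natDegree_lt (by omega)]; simp
    have hodd : Odd (e + 1) := by
      have h1 := hF' (K + (e + 1))
      rw [hKmax _ (by omega), sum_eq_single e] at h1
      · simp only [derivative_zero, mul_zero, add_zero, sub_zero, Nat.add_sub_cancel, htop] at h1
        have h2 := mul_eq_zero.1 h1.symm
        rcases h2 with h2 | h2
        · rw [C_eq_zero] at h2
          have : (K + (e + 1)).descFactorial (e + 1) = 0 := by exact_mod_cast h2
          rw [Nat.descFactorial_eq_zero_iff_lt] at this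
          omega
        · have h3 := (mul_eq_zero.1 h2).resolve_left hK
          rw [← C_add, C_eq_zero] at h3
          by_contra hev
          rw [Nat.not_odd_iff_even] at hev
          rw [hev.neg_one_pow] at h3
          apply hlead
          linear_combination h3 / 2
      · intro s hs hse
        rw [mem_range] at hs
        rcases lt_or_gt_of_ne hse with h | h
        · rw [hKmax (K + (e + 1) - (s + 1)) (by omega)]; simp
        · rw [hbig (s + 1) (by omega)]; simp
      · intro h
        exact absurd (mem_range.2 (by omega)) h
    have he2 : e ≠ 0 := by
      intro h
      subst h
      exact hlead hpi1
    obtain ⟨f, rfl⟩ : ∃ f, e = f + 1 := ⟨e - 1, by omega⟩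
    have hev : Even (f + 1) := by
      rcases hodd with ⟨r, hr⟩
      exact ⟨r, by omega⟩
    have h1 := hF' (K + (f + 1))
    rw [hKmax _ (by omega), sum_eq_single f] at h1
    · simp only [derivative_zero, mul_zero, add_zero, sub_zero, Nat.add_sub_cancel] at h1
      have h2 := mul_eq_zero.1 h1.symm
      rcases h2 with h2 | h2
      · rw [C_eq_zero] at h2
        have : (K + (f + 1)).descFactorial (f + 1) = 0 := by exact_mod_cast h2
        rw [Nat.descFactorial_eq_zero_iff_lt] at this
        omega
      · have h3 := (mul_eq_zero.1 h2).resolve_left hK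
        have h4 := congrArg (fun f => coeff f 1) h3
        simp only [coeff_add, hasseDeriv_coeff, coeff_C, coeff_zero] at h4
        rw [if_neg (by norm_num), add_zero, show 1 + (f + 1) = f + 1 + 1 by ring] at h4
        rcases mul_eq_zero.1 h4 with h5 | h5
        · have : (f + 1 + 1).choose (f + 1) = 0 := by exact_mod_cast h5
          rw [Nat.choose_eq_zero_iff] at this
          omega
        · exact hlead h5
    · intro s hs hse
      rw [mem_range] at hs
      rcases lt_or_gt_of_ne hse with h | h
      · rw [hKmax (K + (f + 1) - (s + 1)) (by omega)]; simp
      · by_cases hsf : s = f + 1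
        · subst hsf
          rw [htop, hodd.neg_one_pow, ← C_add]
          simp
        · rw [hbig (s + 1) (by omega)]; simp
    · intro h
      exact absurd (mem_range.2 (by omega)) h
  have hqC : q = C (((n : ℂ) + 1) * (n + 2)) := by
    rw [eq_C_of_natDegree_eq_zero hdeg, hpi0]
  refine ⟨hqC, ?_⟩
  intro k hk
  have h1 := hF' k
  rw [sum_eq_zero] at h1
  · ext d
    have h2 := congrArg (fun f => coeff f d) h1
    simp only [hpi0, coeff_sub, coeff_add, coeff_C_mul, coeff_zero] at h2
    have h3 : (X * derivative (p k)).coeff d = d * (p k).coeff d := by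
      rcases d with _ | d
      · simp
      · rw [coeff_X_mul, coeff_derivative]; push_cast; ring
    rw [h3] at h2
    have h4 : ((n : ℂ) + 1) * ((((d + k - (n + 1) : ℕ)) : ℂ) * (p k).coeff d) = 0 := by
      rw [Nat.cast_sub (by omega)]
      push_cast
      linear_combination h2
    have h5 := (mul_eq_zero.1 h4).resolve_left hn1
    rw [coeff_zero]
    refine (mul_eq_zero.1 h5).resolve_left ?_
    norm_cast
    omega
  · intro s hs
    rw [hasseDeriv_eq_zero_of_lt_natDegree _ _ (by omega),
        coeff_eq_zero_of_natDegree_lt (by omega)]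
    simp

end polys

end VertexAlgebra

namespace VertexAlgebra

open Finset Polynomial

section rank

variable {V : Type*} [AddCommGroup V] [Module ℂ V] {W : VertexAlgebra V}

theorem decomp (hfin : W.IsFinite) (hD : W.Dom) (hHD : ∀ d ∈ W.HD, ∃ s : ℂ, d = s • W.D)
    (n : ℕ) (a : V) (hlow : ∀ j < n, ∀ x : V, W.P (j : ℕ) x = 0) (ha : W.P n a = W.D) (x : V) :
    ∃ (α β : ℂ) (w : V), x = α • W.vac + β • a + W.D w := by
  have hF : ∀ x, x ∈ W.F n := fun x j hj => hlow j hj x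
  obtain ⟨c, hc⟩ := hHD _ (top_HD (hF x))
  have hb : x - c • a ∈ W.F (n + 1) := by
    apply mem_F_succ (hF _)
    rw [map_sub, map_smul, ha, hc, sub_self]
  set b := x - c • a with hbdef
  obtain ⟨s, hs⟩ := hHD _ (top_HD hb)
  have key : ∃ w, W.D b = W.D (W.D w) := by
    obtain ⟨N, hN⟩ := W.field_ax' n b a
    have h1 := W.skew_sum n a b (N + 2) (fun j hj => hN j (by omega))
    rw [ha, sum_range_succ', sum_range_succ'] at h1
    have h2 : W.P ((n : ℤ) + ((0 + 1 : ℕ) : ℤ)) b a = s • W.D a := by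
      have : ((n : ℤ) + ((0 + 1 : ℕ) : ℤ)) = ((n + 1 : ℕ) : ℤ) := by push_cast; ring
      rw [this, hs]; rfl
    have h3 : W.P ((n : ℤ) + ((0 : ℕ) : ℤ)) b a = 0 := by
      have : ((n : ℤ) + ((0 : ℕ) : ℤ)) = (n : ℤ) := by simp
      rw [this, hb n (by omega)]; rfl
    rw [h2, h3] at h1
    refine ⟨(∑ j ∈ range N, ((-1 : ℂ) ^ ((n : ℤ) + ((j + 1 + 1 : ℕ) : ℤ) + 1) /
      ((j + 1 + 1).factorial : ℂ)) • (W.D ^ j) (W.P ((n : ℤ) + ((j + 1 + 1 : ℕ) : ℤ)) b a))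
      + ((-1 : ℂ) ^ ((n : ℤ) + ((0 + 1 : ℕ) : ℤ) + 1) /
      ((0 + 1).factorial : ℂ)) • s • a, ?_⟩
    rw [h1, map_add, map_add, map_sum, map_sum, map_zero, smul_zero, add_zero]
    congr 1
    · apply sum_congr rfl
      intro j _
      rw [map_smul, map_smul, pow_succ', pow_succ']; rfl
    · simp
  obtain ⟨w, hw⟩ := key
  obtain ⟨α, hα⟩ := L1 hfin hD (b - W.D w) (by rw [map_sub, hw, sub_self])
  refine ⟨α, c, w, ?_⟩
  rw [← hα, hbdef]
  abel

theorem exists_co (hfin : W.IsFinite) (hD : W.Dom) (hT : ∃ v, W.D v ≠ 0) (a : V)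
    (hdec : ∀ x : V, ∃ (α β : ℂ) (w : V), x = α • W.vac + β • a + W.D w) :
    ∃ (g : V) (co : V →ₗ[ℂ] ℂ[X]), co g = 1 ∧ (∀ v, co (W.D v) = X * co v) ∧
      ∀ v, co v = 0 → ∃ α : ℂ, v = α • W.vac := by
  letI := W.polyModule
  have hno := W.noeth hfin
  have hact : ∀ (p : ℂ[X]) (v : V), p • v = aeval W.D p v := fun _ _ => rfl
  have hstab : ∀ x ∈ Submodule.span ℂ {W.vac}, W.D x ∈ Submodule.span ℂ {W.vac} := by
    intro x hx
    obtain ⟨c, rfl⟩ := Submodule.mem_span_singleton.1 hx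
    rw [map_smul, W.D_vac, smul_zero]; exact Submodule.zero_mem _
  let N : Submodule ℂ[X] V := W.toPoly (Submodule.span ℂ {W.vac}) hstab
  have hN : ∀ v, v ∈ N ↔ ∃ c : ℂ, v = c • W.vac := by
    intro v
    change v ∈ Submodule.span ℂ {W.vac} ↔ _
    rw [Submodule.mem_span_singleton]
    exact ⟨fun ⟨c, hc⟩ => ⟨c, hc.symm⟩, fun ⟨c, hc⟩ => ⟨c, hc.symm⟩⟩
  have htf : Module.IsTorsionFree ℂ[X] (V ⧸ N) := by
    refine Module.IsTorsionFree.of_smul_eq_zero ?_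
    intro p m h
    by_cases hp : p = 0
    · exact Or.inl hp
    right
    obtain ⟨v, rfl⟩ := N.mkQ_surjective m
    rw [← map_smul, Submodule.mkQ_apply, Submodule.Quotient.mk_eq_zero] at h
    rw [Submodule.mkQ_apply, Submodule.Quotient.mk_eq_zero]
    obtain ⟨c, hc⟩ := (hN _).1 h
    rw [hact] at hc
    rw [hN]
    apply torsion hfin hD (X * p) (mul_ne_zero X_ne_zero hp)
    rw [map_mul, aeval_X, Module.End.mul_apply, hc, map_smul, W.D_vac, smul_zero]
  have hfree : Module.Free ℂ[X] (V ⧸ N) := Module.free_of_finite_type_torsion_free'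
  obtain ⟨v0, hv0⟩ := hT
  let b := Module.Free.chooseBasis ℂ[X] (V ⧸ N)
  have hne : Nonempty (Module.Free.ChooseBasisIndex ℂ[X] (V ⧸ N)) := by
    by_contra hemp
    rw [not_nonempty_iff] at hemp
    have : N.mkQ v0 = 0 := b.repr.injective (Subsingleton.elim _ _)
    rw [Submodule.mkQ_apply, Submodule.Quotient.mk_eq_zero, hN] at this
    obtain ⟨c, hc⟩ := this
    apply hv0
    rw [hc, map_smul, W.D_vac, smul_zero]
  obtain ⟨i⟩ := hne
  have hC : ∀ (z : ℂ) (v : V), N.mkQ (z • v) = (C z : ℂ[X]) • N.mkQ v := by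
    intro z v
    rw [← map_smul, hact]; simp
  have hX : ∀ (v : V), N.mkQ (W.D v) = (X : ℂ[X]) • N.mkQ v := by
    intro v
    rw [← map_smul, hact]; simp
  have hvac : N.mkQ W.vac = 0 := by
    rw [Submodule.mkQ_apply, Submodule.Quotient.mk_eq_zero, hN]
    exact ⟨1, by simp⟩
  have hval : ∀ m : V ⧸ N, ∃ β : ℂ, ∀ j, (b.coord j m).eval 0 = β * (b.coord j (N.mkQ a)).eval 0 := by
    intro m
    obtain ⟨v, rfl⟩ := N.mkQ_surjective m
    obtain ⟨α, β, w, rfl⟩ := hdec v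
    refine ⟨β, fun j => ?_⟩
    rw [N.mkQ.map_add, N.mkQ.map_add, hC, hC, hX, hvac]
    simp
  have huniq : ∀ j, j = i := by
    intro j
    by_contra hij
    obtain ⟨β1, h1⟩ := hval (b i)
    obtain ⟨β2, h2⟩ := hval (b j)
    have a1 := h1 i
    have a2 := h1 j
    have a3 := h2 i
    have a4 := h2 j
    rw [b.coord_apply, b.repr_self, Finsupp.single_eq_same, eval_one] at a1 a4
    rw [b.coord_apply, b.repr_self, Finsupp.single_eq_of_ne hij, eval_zero] at a2
    rw [b.coord_apply, b.repr_self, Finsupp.single_eq_of_ne (Ne.symm hij), eval_zero] at a3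
    have z2 : β1 ≠ 0 := by rintro rfl; simp at a1
    have z4 := (mul_eq_zero.1 a2.symm).resolve_left z2
    rw [z4] at a4
    simp at a4
  obtain ⟨g, hg⟩ := N.mkQ_surjective (b i)
  refine ⟨g, { toFun := fun v => b.coord i (N.mkQ v), map_add' := by intro x y; simp, map_smul' := ?_ }, ?_, ?_, ?_⟩
  · intro z v
    rw [hC, map_smul, smul_eq_mul, RingHom.id_apply, Polynomial.smul_eq_C_mul]
  · change b.coord i (N.mkQ g) = 1
    rw [hg, b.coord_apply, b.repr_self, Finsupp.single_eq_same]
  · intro v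
    change b.coord i (N.mkQ (W.D v)) = X * b.coord i (N.mkQ v)
    rw [hX, map_smul, smul_eq_mul]
  · intro v hv
    change b.coord i (N.mkQ v) = 0 at hv
    have : N.mkQ v = 0 := by
      apply b.repr.injective
      ext1 j
      rw [huniq j, ← b.coord_apply, hv]; simp
    rw [Submodule.mkQ_apply, Submodule.Quotient.mk_eq_zero, hN] at this
    exact this

/-- rank one data -/
structure R1 (W : VertexAlgebra V) (n : ℕ) (a : V) (co : V →ₗ[ℂ] ℂ[X]) : Prop where
  hlow : ∀ j < n, ∀ x, W.P (j : ℕ) x = 0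
  hn : W.P n a = W.D
  coa : co a = 1
  coD : ∀ v, co (W.D v) = X * co v
  ker : ∀ v, co v = 0 → ∃ α : ℂ, v = α • W.vac

theorem co_aeval {co : V →ₗ[ℂ] ℂ[X]} (coD : ∀ v, co (W.D v) = X * co v) (f : ℂ[X]) (v : V) :
    co (aeval W.D f v) = f * co v := by
  have hpow : ∀ m : ℕ, co ((W.D ^ m) v) = X ^ m * co v := by
    intro m
    induction m with
    | zero => simp
    | succ m ih => rw [pow_succ', Module.End.mul_apply, coD, ih, pow_succ', mul_assoc]
  induction f using Polynomial.induction_on' with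
  | add p q hp hq => rw [map_add, LinearMap.add_apply, map_add, hp, hq, add_mul]
  | monomial m z =>
    rw [aeval_monomial, Module.End.mul_apply, Module.algebraMap_end_apply, map_smul, hpow,
      ← C_mul_X_pow_eq_monomial, Polynomial.smul_eq_C_mul, mul_assoc]

theorem vac_nat (k : ℕ) : W.P (k : ℤ) W.vac = 0 := by
  ext x
  rw [W.vac_field, if_neg (by omega)]; rfl

theorem exists_R1 (hfin : W.IsFinite) (hD : W.Dom) (hnc : ∃ (j : ℕ) (x : V), W.P j x ≠ 0) :
    ∃ n a co, R1 W n a co := by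
  classical
  obtain ⟨x, hx⟩ := Nat.find_spec hnc
  set n := Nat.find hnc with hn
  have hlow : ∀ j < n, ∀ x, W.P (j : ℕ) x = 0 := by
    intro j hj x
    by_contra hne
    exact Nat.find_min hnc hj ⟨x, hne⟩
  have hF : ∀ x, x ∈ W.F n := fun x j hj => hlow j hj x
  have hx' : x ∉ W.F (n + 1) := fun h => hx (h n (by omega))
  have hHD : ∀ d ∈ W.HD, ∃ s : ℂ, d = s • W.D := fun d hd => mainM hfin hD n x (hF x) hx' hd
  obtain ⟨c, hc⟩ := hHD _ (top_HD (hF x))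
  have hc0 : c ≠ 0 := by
    rintro rfl
    rw [zero_smul] at hc
    exact hx hc
  have hT : ∃ v, W.D v ≠ 0 := by
    by_contra! h
    apply hx
    rw [hc]
    ext v
    simp [h v]
  obtain ⟨g, co, h1, h2, h3⟩ := exists_co hfin hD hT (c⁻¹ • x)
    (decomp hfin hD hHD n (c⁻¹ • x) hlow (by
      rw [map_smul, hc, smul_smul, inv_mul_cancel₀ hc0, one_smul]))
  obtain ⟨e, he⟩ := hHD _ (top_HD (hF g))
  have he0 : e ≠ 0 := by
    rintro rfl
    rw [zero_smul] at he
    apply hx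
    obtain ⟨α, hα⟩ := h3 (x - aeval W.D (co x) g) (by
      rw [map_sub, co_aeval h2, h1, mul_one, sub_self])
    rw [sub_eq_iff_eq_add.1 hα, map_add, map_smul, vac_nat, top_aeval (hF g), he]
    simp
  refine ⟨n, e⁻¹ • g, e • co, hlow, ?_, ?_, ?_, ?_⟩
  · rw [map_smul, he, smul_smul, inv_mul_cancel₀ he0, one_smul]
  · rw [LinearMap.smul_apply, map_smul, smul_smul, mul_inv_cancel₀ he0, one_smul, h1]
  · intro v
    rw [LinearMap.smul_apply, h2, LinearMap.smul_apply, mul_smul_comm]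
  · intro v hv
    exact h3 v ((smul_eq_zero.1 hv).resolve_left he0)

section
variable {n : ℕ} {a : V} {co : V →ₗ[ℂ] ℂ[X]}

theorem R1.co_vac (h : R1 W n a co) : co W.vac = 0 := by
  have := h.coD W.vac
  rw [W.D_vac, map_zero] at this
  exact (mul_eq_zero.1 this.symm).resolve_left X_ne_zero

theorem R1.rep (h : R1 W n a co) (v : V) : ∃ α : ℂ, v = aeval W.D (co v) a + α • W.vac := by
  obtain ⟨α, hα⟩ := h.ker (v - aeval W.D (co v) a) (by
      rw [map_sub, co_aeval h.coD, h.coa, mul_one, sub_self])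
  exact ⟨α, by rw [← hα]; abel⟩

theorem mode_comm_D (h : R1 W n a co) (k : ℕ) (v : V) : W.P (k : ℤ) a (W.D v) = W.D (W.P (k : ℤ) a v)
    + (k : ℂ) • W.P ((k - 1 : ℕ) : ℤ) a v := by
  rw [W.D_deriv]
  rcases k with _ | k
  · rw [mode_D]; simp
  · rw [mode_D_nat]
    simp only [Nat.add_sub_cancel, LinearMap.smul_apply]
    push_cast
    module

theorem R1.co_mode_aux (h : R1 W n a co) (f : ℂ[X]) : ∀ k : ℕ, co (W.P (k : ℤ) a (aeval W.D f a)) =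
    ∑ s ∈ range (k + 1), C (k.descFactorial s : ℂ) *
      (hasseDeriv s f * co (W.P ((k - s : ℕ) : ℤ) a a)) := by
  have step : ∀ f : ℂ[X], (∀ k : ℕ, co (W.P (k : ℤ) a (aeval W.D f a)) =
    ∑ s ∈ range (k + 1), C (k.descFactorial s : ℂ) *
      (hasseDeriv s f * co (W.P ((k - s : ℕ) : ℤ) a a))) →
      ∀ k : ℕ, co (W.P (k : ℤ) a (aeval W.D (X * f) a)) =
    ∑ s ∈ range (k + 1), C (k.descFactorial s : ℂ) *
      (hasseDeriv s (X * f) * co (W.P ((k - s : ℕ) : ℤ) a a)) := by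
    intro f hf k
    rw [map_mul, aeval_X, Module.End.mul_apply, mode_comm_D h, map_add, h.coD, hf k, map_smul,
      hf (k - 1)]
    rw [sum_range_succ' _ k, sum_range_succ' _ k]
    simp only [hasse_X_mul, hasseDeriv_zero, LinearMap.id_apply]
    rcases k with _ | k
    · simp
      ring
    · have : ∀ s, ((k + 1).descFactorial (s + 1) : ℂ) = ((k + 1 : ℕ) : ℂ) * (k.descFactorial s : ℂ) := by
        intro s
        rw [Nat.succ_descFactorial_succ]; push_cast; ring
      simp only [add_mul, mul_add, sum_add_distrib, Nat.add_sub_cancel, Nat.add_sub_add_right]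
      rw [Polynomial.smul_eq_C_mul, mul_sum, mul_sum]
      have e1 : ∑ x ∈ range (k + 1), C ((k + 1 : ℕ) : ℂ) * (C (k.descFactorial x : ℂ) *
          (hasseDeriv x f * co (W.P ((k - x : ℕ) : ℤ) a a))) =
          ∑ x ∈ range (k + 1), C ((k + 1).descFactorial (x + 1) : ℂ) *
          (hasseDeriv x f * co (W.P ((k - x : ℕ) : ℤ) a a)) := by
        apply sum_congr rfl
        intro x _
        rw [this, map_mul, mul_assoc]
      rw [e1]
      have e2 : ∑ x ∈ range (k + 1), X * (C ((k + 1).descFactorial (x + 1) : ℂ) *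
          (hasseDeriv (x + 1) f * co (W.P ((k - x : ℕ) : ℤ) a a))) =
          ∑ x ∈ range (k + 1), C ((k + 1).descFactorial (x + 1) : ℂ) *
          (X * hasseDeriv (x + 1) f * co (W.P ((k - x : ℕ) : ℤ) a a)) := by
        apply sum_congr rfl
        intro x _
        ring
      rw [e2]
      ring
  induction f using Polynomial.induction_on' with
  | add p q hp hq =>
    intro k
    rw [map_add, LinearMap.add_apply, map_add, map_add, hp, hq, ← sum_add_distrib]
    apply sum_congr rfl
    intro s _
    rw [map_add]; ring
  | monomial m z =>
    induction m with
    | zero =>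
      intro k
      rw [sum_range_succ', sum_eq_zero]
      · simp [Polynomial.smul_eq_C_mul]
      · intro s _
        have : hasseDeriv (s + 1) (monomial 0 z : ℂ[X]) = 0 :=
          hasseDeriv_eq_zero_of_lt_natDegree _ _ (by simp)
        rw [this]; simp
    | succ m ih =>
      have e : (monomial (m + 1) z : ℂ[X]) = X * monomial m z := by
        rw [X_mul_monomial]
      rw [e]
      exact step _ ih

theorem R1.co_mode (h : R1 W n a co) (k : ℕ) (v : V) : co (W.P (k : ℤ) a v) =
    ∑ s ∈ range (k + 1), C (k.descFactorial s : ℂ) *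
      (hasseDeriv s (co v) * co (W.P ((k - s : ℕ) : ℤ) a a)) := by
  obtain ⟨α, hα⟩ := h.rep v
  rw [← h.co_mode_aux]
  conv_lhs => rw [hα]
  rw [map_add, map_smul, W.creation_pos a k (by omega), smul_zero, add_zero]

theorem mode_D_pow (v : V) (m : ℕ) : ∀ k : ℕ, W.P (k : ℤ) ((W.D ^ m) v) =
    ((-1) ^ m * (k.descFactorial m : ℂ)) • W.P ((k - m : ℕ) : ℤ) v := by
  induction m generalizing v with
  | zero => intro k; simp
  | succ m ih =>
    intro k
    rw [pow_succ, Module.End.mul_apply, ih, Nat.descFactorial_succ]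
    rcases Nat.eq_zero_or_pos (k - m) with h0 | h0
    · rw [h0, mode_D]; simp
    · obtain ⟨r, hr⟩ : ∃ r, k - m = r + 1 := ⟨k - m - 1, by omega⟩
      rw [hr, mode_D_nat, show k - (m + 1) = r by omega, smul_smul]
      congr 1
      push_cast
      ring

theorem R1.co_left_aux (h : R1 W n a co) (f : ℂ[X]) (k : ℕ) : co (W.P (k : ℤ) (aeval W.D f a) a) =
    ∑ s ∈ range (k + 1), C (f.coeff s * (-1) ^ s * (k.descFactorial s : ℂ)) *
      co (W.P ((k - s : ℕ) : ℤ) a a) := by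
  induction f using Polynomial.induction_on' with
  | add p q hp hq =>
    rw [map_add, LinearMap.add_apply, map_add, LinearMap.add_apply, map_add, hp, hq,
      ← sum_add_distrib]
    apply sum_congr rfl
    intro s _
    rw [coeff_add, add_mul, add_mul, map_add, add_mul]
  | monomial m z =>
    rw [aeval_monomial, Module.End.mul_apply, Module.algebraMap_end_apply, map_smul, mode_D_pow,
      LinearMap.smul_apply, LinearMap.smul_apply, map_smul, map_smul, smul_smul]
    by_cases hm : m ≤ k
    · rw [sum_eq_single m]
      · rw [coeff_monomial, if_pos rfl, Polynomial.smul_eq_C_mul, mul_assoc]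
      · intro s _ hs
        rw [coeff_monomial, if_neg (Ne.symm hs)]; simp
      · intro hm'
        exact absurd (mem_range.2 (by omega)) hm'
    · rw [Nat.descFactorial_eq_zero_iff_lt.2 (by omega), sum_eq_zero]
      · simp
      · intro s hs
        rw [mem_range] at hs
        rw [coeff_monomial, if_neg (by omega)]; simp

theorem R1.co_left (h : R1 W n a co) (v : V) (k : ℕ) : co (W.P (k : ℤ) v a) =
    ∑ s ∈ range (k + 1), C ((co v).coeff s * (-1) ^ s * (k.descFactorial s : ℂ)) *
      co (W.P ((k - s : ℕ) : ℤ) a a) := by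
  obtain ⟨α, hα⟩ := h.rep v
  rw [← h.co_left_aux]
  conv_lhs => rw [hα]
  rw [map_add, map_smul, vac_nat, smul_zero, add_zero]

theorem R1.co_E (h : R1 W n a co) (v : V) : co (W.P ((n + 1 : ℕ) : ℤ) a v) =
    co (W.P ((n + 1 : ℕ) : ℤ) a a) * co v + C ((n : ℂ) + 1) * (X * derivative (co v)) := by
  rw [h.co_mode, sum_range_succ', sum_range_succ', sum_eq_zero]
  · have : co (W.P ((n + 1 - (0 + 1) : ℕ) : ℤ) a a) = X := by
      rw [show n + 1 - (0 + 1) = n by omega, h.hn, h.coD, h.coa, mul_one]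
    rw [this]
    simp
    ring
  · intro s hs
    rw [mem_range] at hs
    rw [h.hlow (n + 1 - (s + 1 + 1)) (by omega)]
    simp

theorem R1.formula (h : R1 W n a co) (k : ℕ) : co (W.P ((n + 1 : ℕ) : ℤ) a a) * co (W.P (k : ℤ) a a)
      + C ((n : ℂ) + 1) * (X * derivative (co (W.P (k : ℤ) a a)))
      - ∑ s ∈ range (k + 1), C (k.descFactorial s : ℂ) *
        (hasseDeriv s (co (W.P ((n + 1 : ℕ) : ℤ) a a)) * co (W.P ((k - s : ℕ) : ℤ) a a))
      = - (C (((n : ℂ) + 1) * (k + 1)) * co (W.P (k : ℤ) a a))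
        + ∑ s ∈ range (k + 1), C ((co (W.P ((n + 1 : ℕ) : ℤ) a a)).coeff s * (-1) ^ s *
            (k.descFactorial s : ℂ)) * co (W.P ((k - s : ℕ) : ℤ) a a) := by
  rw [← h.co_E, ← h.co_mode, ← h.co_left, ← map_sub, W.comm_nat]
  rw [sum_range_succ, sum_range_succ, sum_eq_zero]
  · rw [zero_add, h.hn]
    have e1 : (((n + 1 : ℕ) : ℤ) + k - n) = ((k + 1 : ℕ) : ℤ) := by push_cast; ring
    have e2 : (((n + 1 : ℕ) : ℤ) + k - (n + 1 : ℕ)) = (k : ℤ) := by push_cast; ring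
    rw [e1, e2, mode_D_nat, Nat.choose_self, Nat.choose_symm_of_eq_add (b := 1) rfl,
      map_add, Nat.cast_one, one_smul, LinearMap.smul_apply, smul_smul, map_smul,
      Polynomial.smul_eq_C_mul, ← neg_mul, ← map_neg, Nat.choose_one_right]
    congr 3
    push_cast
    ring
  · intro j hj
    rw [mem_range] at hj
    rw [h.hlow j hj]; simp

theorem R1.poly (h : R1 W n a co) : co (W.P ((n + 1 : ℕ) : ℤ) a a) = C (((n : ℂ) + 1) * (n + 2)) ∧
    ∀ k > n + 1, co (W.P (k : ℕ) a a) = 0 := by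
  apply poly_arg n (fun k => co (W.P (k : ℕ) a a))
  · intro j hj
    simp [h.hlow j hj]
  · simp only [h.hn, h.coD, h.coa, mul_one]
  · obtain ⟨N, hN⟩ := W.field_ax a a
    exact ⟨N, fun k hk => by simp [hN k hk]⟩
  · exact h.formula

theorem R1.n_zero (h : R1 W n a co) : n = 0 := by
  by_contra hn0
  have h1 := W.skew_sum 0 a a
  obtain ⟨N, hN⟩ := W.field_ax' 0 a a
  have h1 := congrArg co (W.skew_sum 0 a a (n + 2 + N) (fun j hj => hN j (by omega)))
  have h2 : W.P 0 a a = 0 := by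
    have := h.hlow 0 (by omega) a
    rw [Nat.cast_zero] at this
    rw [this]; rfl
  have hcoe : ∀ j : ℕ, co ((((-1 : ℂ) ^ ((0 : ℤ) + j + 1)) / (j.factorial : ℂ)) •
      (W.D ^ j) (W.P (0 + j) a a)) = C (((-1 : ℂ) ^ ((0 : ℤ) + j + 1)) / (j.factorial : ℂ)) *
      (X ^ j * co (W.P (j : ℤ) a a)) := by
    intro j
    have := co_aeval h.coD (X ^ j) (W.P (j : ℤ) a a)
    rw [map_pow, aeval_X] at this
    rw [map_smul, zero_add, this, Polynomial.smul_eq_C_mul]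
  rw [h2, map_zero, map_sum, sum_range_add, sum_range_succ, sum_range_succ, sum_eq_zero, sum_eq_zero] at h1
  · rw [hcoe, hcoe, h.poly.1, h.hn, h.coD, h.coa] at h1
    have e0 : ∀ j : ℕ, (-1 : ℂ) ^ ((0 : ℤ) + j + 1) = (-1) ^ (j + 1) := by
      intro j
      rw [zero_add]; exact_mod_cast zpow_natCast (-1 : ℂ) (j + 1)
    rw [e0, e0] at h1
    have h3 := congrArg (fun f => coeff f (n + 1)) h1
    simp only [mul_one, ← pow_succ, zero_add, add_zero, coeff_add, coeff_C_mul, coeff_X_pow_self,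
      coeff_mul_C, coeff_zero, Nat.factorial_succ, one_mul] at h3
    have hf : (n.factorial : ℂ) ≠ 0 := by exact_mod_cast n.factorial_ne_zero
    have hn1 : ((n : ℂ) + 1) ≠ 0 := by exact_mod_cast Nat.succ_ne_zero n
    push_cast at h3
    field_simp at h3
    have hp : ((-1 : ℂ)) ^ n ≠ 0 := pow_ne_zero _ (by norm_num)
    have h4 : ((n : ℂ) + 1) * (-1) ^ n = 0 := by
      rw [pow_succ, pow_succ] at h3
      linear_combination -h3
    exact mul_ne_zero hn1 hp h4
  · intro j _
    rw [hcoe, h.poly.2 _ (by omega)]; simp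
  · intro j hj
    rw [hcoe, h.hlow j (mem_range.1 hj)]; simp

end

end rank

end VertexAlgebra

namespace VertexAlgebra

open Finset Polynomial

section leeyang

variable {V : Type*} [AddCommGroup V] [Module ℂ V] {W : VertexAlgebra V}

theorem vac_ne (m : ℤ) (h : m ≠ -1) : W.P m W.vac = 0 := by
  ext x
  rw [W.vac_field, if_neg h]; rfl

theorem lee_yang {a : V} {co : V →ₗ[ℂ] ℂ[X]} (h : R1 W 0 a co) : False := by
  have hp1 := h.poly.1
  have hpk := h.poly.2
  obtain ⟨q1, hq1⟩ := h.rep (W.P ((0 + 1 : ℕ) : ℤ) a a)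
  rw [hp1] at hq1
  obtain ⟨L, hL⟩ : ∃ L, L = a + (q1 / 2) • W.vac := ⟨_, rfl⟩
  have hmode : ∀ m : ℤ, m ≠ -1 → W.P m L = W.P m a := by
    intro m hm
    rw [hL, map_add, map_smul, vac_ne m hm, smul_zero, add_zero]
  have hmodeL : ∀ m : ℤ, 0 ≤ m → W.P m L L = W.P m a a := by
    intro m hm
    rw [hmode m (by omega), hL, map_add, map_smul, W.creation_pos a m hm, smul_zero, add_zero]
  have L0 : W.P 0 L = W.D := by
    rw [hmode 0 (by omega)]
    exact_mod_cast h.hn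
  have L1' : W.P 1 L L = (2 : ℂ) • L := by
    rw [hmodeL 1 (by omega)]
    have e : ((0 + 1 : ℕ) : ℤ) = 1 := by norm_num
    rw [e] at hq1
    rw [hq1, hL]
    simp
    rw [smul_smul]
    congr 2
    ring
  have coL : co L = 1 := by
    rw [hL, map_add, map_smul, h.co_vac, smul_zero, add_zero, h.coa]
  have hE : ∀ (k : ℤ) (v : V), W.P 1 L (W.P k L v) = W.P k L (W.P 1 L v)
      + (1 - k : ℂ) • W.P k L v := by
    intro k v
    have := W.comm_nat 1 k L L v
    simp only [sum_range_succ, range_zero, sum_empty, Nat.cast_zero, Nat.cast_one, L0, L1',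
      Nat.choose_self, Nat.choose_zero_right, zero_add, one_smul, sub_zero, map_smul,
      LinearMap.smul_apply] at this
    rw [W.transl_inv, show (1 + k - 1 : ℤ) = k by ring] at this
    rw [sub_eq_iff_eq_add.1 this]
    push_cast
    module
  have hq : ∀ j : ℕ, 2 ≤ j → ∃ q : ℂ, W.P j L L = q • W.vac := by
    intro j hj
    apply h.ker
    rw [hmodeL j (by omega), hpk j (by omega)]
  have hqz : ∀ j : ℕ, 2 ≤ j → j ≠ 3 → W.P j L L = 0 := by
    intro j hj hj3
    obtain ⟨q, hq⟩ := hq j hj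
    have := hE j L
    rw [L1', map_smul, hq, map_smul, W.creation_pos L 1 (by omega), smul_zero] at this
    have h3 : (3 - (j : ℂ)) • (q • W.vac) = 0 := by
      rw [this]; push_cast; module
    rw [hq]
    refine (smul_eq_zero.1 h3).resolve_left ?_
    rw [sub_eq_zero]
    intro h
    apply hj3
    exact_mod_cast h.symm
  obtain ⟨c, hc⟩ := hq 3 (by omega)
  have L2' : W.P 2 L L = 0 := by exact_mod_cast hqz 2 (by omega) (by omega)
  have L3' : W.P 3 L L = c • W.vac := by exact_mod_cast hc
  have hcomm : ∀ (m : ℕ) (k : ℤ) (v : V), W.P m L (W.P k L v) = W.P k L (W.P m L v)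
      + (m - k : ℂ) • W.P (m + k - 1) L v + ((m.choose 3 : ℂ) * c) • W.P (m + k - 3) W.vac v := by
    intro m k v
    have := W.comm_sum m k L L v 4 (fun j hj => hqz j (by omega) (by omega))
    simp only [Ring.choose_natCast, sum_range_succ, range_zero, sum_empty, L2', L3',
      Nat.choose_one_right, Nat.cast_zero, Nat.cast_one, L0, L1',
      Nat.choose_zero_right, zero_add, map_zero, LinearMap.zero_apply, smul_zero, add_zero,
      sub_zero, Int.cast_one, one_smul, map_smul, LinearMap.smul_apply, Int.cast_natCast,
      Nat.cast_ofNat] at this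
    rw [W.transl_inv] at this
    rw [sub_eq_iff_eq_add.1 this]
    push_cast
    module
  have hT : ∀ (k : ℕ) (v : V), W.P ((k + 1 : ℕ) : ℤ) L (W.D v) = W.D (W.P ((k + 1 : ℕ) : ℤ) L v)
      + ((k : ℂ) + 1) • W.P (k : ℤ) L v := by
    intro k v
    rw [W.D_deriv, mode_D_nat]
    simp only [LinearMap.smul_apply]
    module
  have T1 : ∀ v, W.P 1 L (W.D v) = W.D (W.P 1 L v) + W.D v := by
    intro v; have := hT 0 v; simpa [L0] using this
  have T2 : ∀ v, W.P 2 L (W.D v) = W.D (W.P 2 L v) + (2 : ℂ) • W.P 1 L v := by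
    intro v; have := hT 1 v; norm_num at this; exact this
  have T3 : ∀ v, W.P 3 L (W.D v) = W.D (W.P 3 L v) + (3 : ℂ) • W.P 2 L v := by
    intro v; have := hT 2 v; norm_num at this; exact this
  have T4 : ∀ v, W.P 4 L (W.D v) = W.D (W.P 4 L v) + (4 : ℂ) • W.P 3 L v := by
    intro v; have := hT 3 v; norm_num at this; exact this
  have T5 : ∀ v, W.P 5 L (W.D v) = W.D (W.P 5 L v) + (5 : ℂ) • W.P 4 L v := by
    intro v; have := hT 4 v; norm_num at this; exact this
  have L4' : W.P 4 L L = 0 := by exact_mod_cast hqz 4 (by omega) (by omega)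
  have L5' : W.P 5 L L = 0 := by exact_mod_cast hqz 5 (by omega) (by omega)
  -- weight spaces
  have hwt : ∀ m : ℕ, W.P 1 L ((W.D ^ m) L) = ((m : ℂ) + 2) • (W.D ^ m) L := by
    intro m
    induction m with
    | zero => simpa using L1'
    | succ m ih =>
      rw [pow_succ', Module.End.mul_apply, T1, ih, map_smul]
      push_cast
      module
  have hspace : ∀ (w : ℕ) (v : V), 0 < w → W.P 1 L v = ((w : ℂ) + 2) • v →
      ∃ γ : ℂ, v = γ • (W.D ^ w) L := by
    intro w v hw hv
    have h1 := h.co_E v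
    have e : ((0 + 1 : ℕ) : ℤ) = 1 := by norm_num
    rw [hp1, e, ← hmode 1 (by omega), hv, map_smul, Polynomial.smul_eq_C_mul] at h1
    have hco : co v = monomial w ((co v).coeff w) := by
      ext d
      rw [coeff_monomial]
      split_ifs with hd
      · rw [hd]
      · have h2 := congrArg (fun f => coeff f d) h1
        have h3 : (X * derivative (co v)).coeff d = d * (co v).coeff d := by
          rcases d with _ | d
          · simp
          · rw [coeff_X_mul, coeff_derivative]; push_cast; ring
        simp only [coeff_add, coeff_C_mul, h3] at h2
        have h4 : ((w : ℂ) - d) * (co v).coeff d = 0 := by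
          push_cast at h2
          linear_combination h2
        refine (mul_eq_zero.1 h4).resolve_left ?_
        rw [sub_eq_zero]
        exact_mod_cast hd
    obtain ⟨α, hα⟩ := h.ker (v - (co v).coeff w • (W.D ^ w) L) (by
      have := co_aeval h.coD (X ^ w) L
      rw [map_pow, aeval_X] at this
      rw [map_sub, map_smul, this, coL, mul_one, Polynomial.smul_eq_C_mul, C_mul_X_pow_eq_monomial,
        ← hco, sub_self])
    have h5 := congrArg (W.P 1 L) hα
    rw [map_sub, hv, map_smul, hwt, map_smul, W.creation_pos L 1 (by omega), smul_zero] at h5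
    have h6 : ((w : ℂ) + 2) • (v - (co v).coeff w • (W.D ^ w) L) = 0 := by
      rw [← h5]; module
    refine ⟨(co v).coeff w, ?_⟩
    have h7 := (smul_eq_zero.1 h6).resolve_left (by exact_mod_cast (by omega : w + 2 ≠ 0))
    exact sub_eq_zero.1 h7
  have hind : ∀ (m : ℕ) (x y : ℂ), x • (W.D ^ m) L = y • (W.D ^ m) L → x = y := by
    intro m x y hxy
    have h1 := congrArg co hxy
    have := co_aeval h.coD (X ^ m) L
    rw [map_pow, aeval_X] at this
    rw [map_smul, map_smul, this, coL, mul_one] at h1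
    have h2 := congrArg (fun f => coeff f m) h1
    simpa using h2
  obtain ⟨β, hβ⟩ := hspace 2 (W.P (-1) L L) (by omega) (by
    rw [hE, L1', map_smul]; push_cast; module)
  obtain ⟨γ, hγ⟩ := hspace 4 (W.P (-3) L L) (by omega) (by
    rw [hE, L1', map_smul]; push_cast; module)
  have x2 : (W.D ^ 2) L = W.D (W.D L) := by rw [pow_two]; rfl
  have x4 : (W.D ^ 4) L = W.D (W.D (W.D (W.D L))) := by
    rw [show 4 = 2 + 2 from rfl, pow_add, pow_two]; rfl
  have x1 : (W.D ^ 1) L = W.D L := by rw [pow_one]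
  have x0 : (W.D ^ 0) L = L := by rw [pow_zero]; rfl
  rw [x2] at hβ
  rw [x4] at hγ
  have v3 : W.P (-3) L W.vac = (1 / 2 : ℂ) • W.D (W.D L) := by
    have h1 := W.D_deriv (-1) L W.vac
    rw [W.creation, W.D_vac, map_zero, add_zero, W.transl_inv] at h1
    have h2 := W.D_deriv (-2) L W.vac
    rw [W.D_vac, map_zero, add_zero, W.transl_inv] at h2
    norm_num at h1 h2
    rw [h1, h2, smul_smul]
    norm_num
  -- weight 4 with mode 2
  have r1 : (3 : ℂ) = 10 * β := by
    have h1 := hcomm 2 (-1) L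
    norm_num [L2', L0] at h1
    rw [hβ] at h1
    apply hind 1
    rw [x1, ← h1]
    simp only [map_smul, map_add, T2, T1, L1', L2', map_zero]
    module
  have r2 : 8 + 2 * c = 12 * β := by
    have h1 := hcomm 3 (-1) L
    norm_num [L3', L1', W.creation, W.vac_field] at h1
    rw [hβ] at h1
    apply hind 0
    rw [x0]
    have h2 : (8 + 2 * c) • L = c • L + (4 : ℂ) • (2 : ℂ) • L + c • L := by module
    rw [h2, ← h1]
    simp only [map_smul, map_add, T3, T2, T1, L1', L2', L3', W.D_vac, map_zero]
    module
  have r3 : 16 + 10 * c = 240 * γ := by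
    have h1 := hcomm 5 (-3) L
    norm_num [L5', L1', W.creation, W.vac_field] at h1
    rw [hγ] at h1
    apply hind 0
    rw [x0]
    have hch : ((Nat.choose 5 3 : ℕ) : ℂ) = 10 := by norm_num [Nat.choose]
    have h2 : (16 + 10 * c) • L = (8 : ℂ) • (2 : ℂ) • L + (10 * c) • L := by module
    try rw [hch] at h1
    rw [h2, ← h1]
    simp only [map_smul, map_add, T5, T4, T3, T2, T1, L1', L2', L3', L4', L5', W.D_vac, map_zero]
    module
  have r4 : c / 2 + 6 * β = 96 * γ := by
    have h1 := hcomm 3 (-3) L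
    norm_num [L3', v3, W.vac_field] at h1
    rw [hγ, hβ] at h1
    apply hind 2
    rw [x2]
    have h2 : (c / 2 + 6 * β) • W.D (W.D L) =
      c • (1 / 2 : ℂ) • W.D (W.D L) + (6 : ℂ) • β • W.D (W.D L) := by module
    rw [h2]
    norm_num
    rw [← h1]
    simp only [map_smul, map_add, T3, T2, T1, L1', L2', L3', W.D_vac, map_zero]
    module
  have hb : β = 3 / 10 := by linear_combination -r1 / 10
  have hcc : c = -11 / 5 := by linear_combination r2 / 2 + 6 * hb
  have hg : γ = -1 / 40 := by linear_combination -r3 / 240 + hcc * 10 / 240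
  rw [hb, hcc, hg] at r4
  norm_num at r4

theorem commutative_of_dom (hfin : W.IsFinite) (hD : W.Dom) (j : ℕ) (x : V) : W.P j x = 0 := by
  by_contra hne
  obtain ⟨n, a, co, h⟩ := exists_R1 hfin hD ⟨j, x, hne⟩
  have := h.n_zero
  subst this
  exact lee_yang h

end leeyang

end VertexAlgebra

namespace VertexAlgebra

open Finset

section quotient

variable {V : Type*} [AddCommGroup V] [Module ℂ V] (W : VertexAlgebra V)

theorem IsIdeal.D_pow {W : VertexAlgebra V} {I : Submodule ℂ V} (hI : W.IsIdeal I) (j : ℕ)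
    (x : V) (hx : x ∈ I) : (W.D ^ j) x ∈ I := by
  induction j with
  | zero => simpa using hx
  | succ j ih => rw [pow_succ', Module.End.mul_apply]; exact hI.1 _ ih

theorem IsIdeal.left {W : VertexAlgebra V} {I : Submodule ℂ V} (hI : W.IsIdeal I)
    (a b : V) (ha : a ∈ I) (n : ℤ) : W.P n a b ∈ I := by
  obtain ⟨N, hN⟩ := W.field_ax' n b a
  rw [W.skew_sum n a b N hN]
  exact I.sum_mem fun j _ => I.smul_mem _ (hI.D_pow j _ (hI.2 _ _ ha _))

/-- the products on the quotient -/
noncomputable def quotP {W : VertexAlgebra V} {I : Submodule ℂ V} (hI : W.IsIdeal I) (n : ℤ) :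
    (V ⧸ I) →ₗ[ℂ] (V ⧸ I) →ₗ[ℂ] (V ⧸ I) :=
  I.liftQ
    { toFun := fun a => I.mapQ I (W.P n a) (fun b hb => hI.2 a b hb n)
      map_add' := by
        intro a b
        ext x
        simp
      map_smul' := by
        intro c a
        ext x
        simp }
    (by
      intro a ha
      rw [LinearMap.mem_ker]
      ext x
      simpa using hI.left a x ha n)

/-- the translation operator on the quotient -/
noncomputable def quotD {W : VertexAlgebra V} {I : Submodule ℂ V} (hI : W.IsIdeal I) :
    (V ⧸ I) →ₗ[ℂ] (V ⧸ I) := I.mapQ I W.D (fun x hx => hI.1 x hx)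

theorem quotP_mk {W : VertexAlgebra V} {I : Submodule ℂ V} (hI : W.IsIdeal I) (n : ℤ) (a b : V) :
    quotP hI n (I.mkQ a) (I.mkQ b) = I.mkQ (W.P n a b) := rfl

theorem quotD_mk {W : VertexAlgebra V} {I : Submodule ℂ V} (hI : W.IsIdeal I) (a : V) :
    quotD hI (I.mkQ a) = I.mkQ (W.D a) := rfl

theorem quotD_pow_mk {W : VertexAlgebra V} {I : Submodule ℂ V} (hI : W.IsIdeal I) (j : ℕ) (a : V) :
    (quotD hI ^ j) (I.mkQ a) = I.mkQ ((W.D ^ j) a) := by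
  induction j with
  | zero => simp
  | succ j ih => rw [pow_succ', pow_succ', Module.End.mul_apply, ih, quotD_mk,
      Module.End.mul_apply]

/-- the quotient vertex algebra -/
noncomputable def quot {W : VertexAlgebra V} {I : Submodule ℂ V} (hI : W.IsIdeal I) :
    VertexAlgebra (V ⧸ I) where
  P := quotP hI
  vac := I.mkQ W.vac
  D := quotD hI
  field_ax := by
    intro a b
    obtain ⟨a, rfl⟩ := I.mkQ_surjective a
    obtain ⟨b, rfl⟩ := I.mkQ_surjective b
    obtain ⟨N, hN⟩ := W.field_ax a b
    exact ⟨N, fun n hn => by rw [quotP_mk, hN n hn, map_zero]⟩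
  vac_field := by
    intro n a
    obtain ⟨a, rfl⟩ := I.mkQ_surjective a
    rw [quotP_mk, W.vac_field]
    split_ifs <;> simp
  creation := by
    intro a
    obtain ⟨a, rfl⟩ := I.mkQ_surjective a
    rw [quotP_mk, W.creation]
  creation_pos := by
    intro a n hn
    obtain ⟨a, rfl⟩ := I.mkQ_surjective a
    rw [quotP_mk, W.creation_pos a n hn, map_zero]
  D_vac := by rw [quotD_mk, W.D_vac, map_zero]
  transl_inv := by
    intro n a b
    obtain ⟨a, rfl⟩ := I.mkQ_surjective a
    obtain ⟨b, rfl⟩ := I.mkQ_surjective b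
    rw [quotD_mk, quotP_mk, quotP_mk, W.transl_inv, map_smul]
  D_deriv := by
    intro n a b
    obtain ⟨a, rfl⟩ := I.mkQ_surjective a
    obtain ⟨b, rfl⟩ := I.mkQ_surjective b
    rw [quotD_mk, quotD_mk, quotP_mk, quotP_mk, quotP_mk, quotD_mk, W.D_deriv, map_add]
  skew := by
    intro n a b
    obtain ⟨a, rfl⟩ := I.mkQ_surjective a
    obtain ⟨b, rfl⟩ := I.mkQ_surjective b
    obtain ⟨N, hN⟩ := W.field_ax' n b a
    rw [quotP_mk, W.skew_sum n a b N hN, map_sum, finsum_eq_sum_of_support_subset (s := range N)]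
    · apply sum_congr rfl
      intro j _
      rw [quotP_mk, quotD_pow_mk, map_smul]
    · intro j hj
      simp only [Function.mem_support, ne_eq] at hj
      simp only [coe_range, Set.mem_Iio]
      by_contra hlt
      apply hj
      rw [quotP_mk, hN j (by omega)]
      simp
  borcherds := by
    intro m k a b c
    obtain ⟨a, rfl⟩ := I.mkQ_surjective a
    obtain ⟨b, rfl⟩ := I.mkQ_surjective b
    obtain ⟨c, rfl⟩ := I.mkQ_surjective c
    obtain ⟨N, hN⟩ := W.field_ax a b
    rw [quotP_mk, quotP_mk, quotP_mk, quotP_mk, ← map_sub, W.comm_sum m k a b c N hN, map_sum,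
      finsum_eq_sum_of_support_subset (s := range N)]
    · apply sum_congr rfl
      intro j _
      rw [quotP_mk, quotP_mk, map_smul]
    · intro j hj
      simp only [Function.mem_support, ne_eq] at hj
      simp only [coe_range, Set.mem_Iio]
      by_contra hlt
      apply hj
      rw [quotP_mk, hN j (by omega)]
      simp

theorem quot_P {W : VertexAlgebra V} {I : Submodule ℂ V} (hI : W.IsIdeal I) (n : ℤ) (a b : V) :
    (quot hI).P n (I.mkQ a) (I.mkQ b) = I.mkQ (W.P n a b) := rfl

theorem quot_D {W : VertexAlgebra V} {I : Submodule ℂ V} (hI : W.IsIdeal I) (a : V) :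
    (quot hI).D (I.mkQ a) = I.mkQ (W.D a) := rfl

theorem quot_finite {W : VertexAlgebra V} {I : Submodule ℂ V} (hI : W.IsIdeal I)
    (hfin : W.IsFinite) : (quot hI).IsFinite := by
  classical
  obtain ⟨s, hs⟩ := hfin
  refine ⟨s.image I.mkQ, fun v => ?_⟩
  obtain ⟨v, rfl⟩ := I.mkQ_surjective v
  have h := Submodule.mem_map_of_mem (f := I.mkQ) (hs v)
  rw [Submodule.map_span] at h
  refine Submodule.span_mono ?_ h
  rintro _ ⟨_, ⟨g, hg, k, rfl⟩, rfl⟩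
  exact ⟨I.mkQ g, mem_image_of_mem _ hg, k, (quotD_pow_mk hI k g).symm⟩

theorem comap_ideal {W : VertexAlgebra V} {I : Submodule ℂ V} (hI : W.IsIdeal I)
    (J : Submodule ℂ (V ⧸ I)) (hJ : (quot hI).IsIdeal J) : W.IsIdeal (J.comap I.mkQ) := by
  refine ⟨fun x hx => ?_, fun a b hb n => ?_⟩
  · rw [Submodule.mem_comap, ← quot_D hI]
    exact hJ.1 _ hx
  · rw [Submodule.mem_comap, ← quot_P hI]
    exact hJ.2 _ _ hb n

theorem posSpan_mono {A B A' B' : Submodule ℂ V} (h : A ≤ A') (h' : B ≤ B') :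
    W.posSpan A B ≤ W.posSpan A' B' := by
  apply Submodule.span_mono
  rintro x ⟨a, ha, b, hb, j, rfl⟩
  exact ⟨a, h ha, b, h' hb, j, rfl⟩

theorem derSeries_succ_le (n : ℕ) : W.derSeries (n + 1) ≤ W.derSeries n := by
  induction n with
  | zero => exact le_top
  | succ n ih => exact W.posSpan_mono ih ih

theorem derSeries_anti : Antitone W.derSeries := antitone_nat_of_succ_le W.derSeries_succ_le

theorem solvable_aux (hfin : W.IsFinite) : ∃ N : ℕ, W.derSeries N ≤ ⊥ := by
  by_contra hcon
  obtain ⟨I, ⟨hI, hIN⟩, hmax⟩ := W.exists_max hfin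
    (fun I => W.IsIdeal I ∧ ¬ ∃ N : ℕ, W.derSeries N ≤ I) (fun I h => h.1.1)
    ⟨⊥, ⟨by rintro x hx; rw [Submodule.mem_bot] at hx ⊢; rw [hx, map_zero],
      by rintro a x hx n; rw [Submodule.mem_bot] at hx ⊢; rw [hx, map_zero]⟩, hcon⟩
  have big : ∀ J : Submodule ℂ (V ⧸ I), (quot hI).IsIdeal J → J ≠ ⊥ →
      ∃ N : ℕ, W.derSeries N ≤ J.comap I.mkQ := by
    intro J hJ hne
    by_contra hno
    apply hne
    have h := hmax _ ⟨comap_ideal hI J hJ, hno⟩ (fun x hx => by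
      rw [Submodule.mem_comap, (Submodule.Quotient.mk_eq_zero I).2 hx |> fun h =>
        (show I.mkQ x = 0 from h)]
      exact J.zero_mem)
    rw [eq_bot_iff]
    intro y hy
    obtain ⟨x, rfl⟩ := I.mkQ_surjective y
    have hx : x ∈ J.comap I.mkQ := hy
    rw [h] at hx
    rw [Submodule.mem_bot]
    exact (Submodule.Quotient.mk_eq_zero I).2 hx
  have hprime : (quot hI).IsPrimeVA := by
    intro J K hJ hK hJK
    by_contra hno
    push Not at hno
    obtain ⟨N, hN⟩ := big J hJ hno.1
    obtain ⟨M, hM⟩ := big K hK hno.2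
    apply hIN
    refine ⟨max N M + 1, ?_⟩
    change W.posSpan _ _ ≤ I
    apply Submodule.span_le.2
    rintro _ ⟨a, ha, b, hb, j, rfl⟩
    have ha' := hN (W.derSeries_anti (le_max_left N M) ha)
    have hb' := hM (W.derSeries_anti (le_max_right N M) hb)
    have := hJK _ ha' _ hb' j
    rw [quot_P] at this
    exact (Submodule.Quotient.mk_eq_zero I).1 this
  have hdom := (quot hI).dom_of_prime hprime
  apply hIN
  refine ⟨1, ?_⟩
  change W.posSpan _ _ ≤ I
  apply Submodule.span_le.2
  rintro _ ⟨a, ha, b, hb, j, rfl⟩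
  have := (quot hI).commutative_of_dom (quot_finite hI hfin) hdom j (I.mkQ a)
  have h2 := quot_P hI j a b
  rw [this] at h2
  exact (Submodule.Quotient.mk_eq_zero I).1 h2.symm

end quotient

end VertexAlgebra

open VertexAlgebra in
/-- every finite vertex algebra is solvable. -/
theorem finite_vertex_algebra_is_solvable {V : Type*} [AddCommGroup V] [Module ℂ V]
    (W : VertexAlgebra V) (hfin : W.IsFinite) :
    ∃ N : ℕ, W.derSeries N = ⊥ := by
  
  obtain ⟨N, hN⟩ := W.solvable_aux hfin
  exact ⟨N, le_bot_iff.1 hN⟩
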